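/- Let Ω ⊂ ℝⁿ be a bounded Lipschitz domain, let F ∈ C¹(ℝ^{N×n}) be convex with ν|z| − L ≤ F(z) ≤ L(1+|z|) for all z, and let T₀ ∈ L^∞(Ω;ℝ^{N×n}) satisfy ess inf_{x∈Ω} min_{|ξ|=1} (F^∞(ξ) − T₀(x)·ξ) > 0. If (u_k) is any minimising sequence of 𝓕[w] = ∫_Ω (F(∇w) − T₀·∇w) dx in W^{1,1}(Ω;ℝ^N), then the sequence (D_z F(∇u_k) − T₀) converges weakly-* in L^∞(Ω;ℝ^{N×n}) to the unique maximiser σ of the dual functional ℛ_{T₀}[χ] = −∫_Ω F*(T₀ + χ) dx over L^∞_⊥(Ω;ℝ^{N×n}). -/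

import Mathlib

open MeasureTheory Filter Topology Set
open scoped ENNReal RealInnerProductSpace

noncomputable section

/-- Euclidean space `ℝⁿ`. -/
abbrev EVec (n : ℕ) := EuclideanSpace ℝ (Fin n)

/-- Frobenius inner product of two "matrices". -/
def mdot {ι κ : Type*} [Fintype ι] [Fintype κ] (A B : ι → κ → ℝ) : ℝ :=
  ∑ a, ∑ i, A a i * B a i

/-- Frobenius norm. -/
noncomputable def mnorm {ι κ : Type*} [Fintype ι] [Fintype κ] (A : ι → κ → ℝ) : ℝ :=
  Real.sqrt (mdot A A)

/-- Euclidean norm of a vector given as a tuple. -/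
noncomputable def vnorm {ι : Type*} [Fintype ι] (v : ι → ℝ) : ℝ :=
  Real.sqrt (∑ a, v a ^ 2)

/-- `Ω ⊆ ℝⁿ` is a (nonempty, open, connected) Lipschitz domain: every boundary point has
a neighbourhood on which `Ω` can be flattened to a half space by a bi-Lipschitz map. -/
def IsLipschitzDomain {n : ℕ} (Ω : Set (EVec n)) : Prop :=
  IsOpen Ω ∧ Ω.Nonempty ∧ IsConnected Ω ∧
  ∀ x ∈ frontier Ω, ∃ (U : Set (EVec n)) (h hinv : EVec n → EVec n) (K : NNReal)
      (e : EVec n),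
    ‖e‖ = 1 ∧ IsOpen U ∧ x ∈ U ∧ LipschitzOnWith K h U ∧
    LipschitzOnWith K hinv (h '' U) ∧ (∀ y ∈ U, hinv (h y) = y) ∧
    h '' (U ∩ Ω) = (h '' U) ∩ {y : EVec n | 0 < ⟪e, y⟫}

/-- `Du` is the weak (distributional) gradient of `u` on `Ω`, and both are integrable;
i.e. `u ∈ W^{1,1}(Ω; ℝ^ι)` with weak gradient `Du`. -/
def HasWeakDerivOn {n : ℕ} {ι : Type*} [Fintype ι] (Ω : Set (EVec n))
    (u : EVec n → ι → ℝ) (Du : EVec n → ι → Fin n → ℝ) : Prop :=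
  IntegrableOn u Ω volume ∧ IntegrableOn Du Ω volume ∧
  ∀ φ : EVec n → ℝ, ContDiff ℝ 1 φ → HasCompactSupport φ → tsupport φ ⊆ Ω →
    ∀ (a : ι) (i : Fin n),
      ∫ x in Ω, u x a * fderiv ℝ φ x (EuclideanSpace.single i 1) =
        - ∫ x in Ω, Du x a i * φ x

/-- `u ∈ W^{1,2}(Ω;ℝ^ι)` with weak gradient `Du`. -/
def MemW12 {n : ℕ} {ι : Type*} [Fintype ι] (Ω : Set (EVec n))
    (u : EVec n → ι → ℝ) (Du : EVec n → ι → Fin n → ℝ) : Prop :=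
  HasWeakDerivOn Ω u Du ∧ IntegrableOn (fun x => vnorm (u x) ^ 2) Ω volume ∧
    IntegrableOn (fun x => mnorm (Du x) ^ 2) Ω volume

/-- vanishing mean value `(u)_Ω = 0`. -/
def ZeroMean {n : ℕ} {ι : Type*} [Fintype ι] (Ω : Set (EVec n))
    (u : EVec n → ι → ℝ) : Prop :=
  ∀ a : ι, ∫ x in Ω, u x a = 0

/-- The `L^∞(Ω)` norm of a matrix field (w.r.t. the pointwise Frobenius norm). -/
noncomputable def linfNormOn {n N : ℕ} (Ω : Set (EVec n))
    (T : EVec n → Fin N → Fin n → ℝ) : ℝ≥0∞ :=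
  essSup (fun x => ENNReal.ofReal (mnorm (T x))) (volume.restrict Ω)

/-- `T ∈ W^{1,∞}(Ω)`: bounded and Lipschitz on `Ω`. -/
def MemW1inf {n N : ℕ} (Ω : Set (EVec n)) (T : EVec n → Fin N → Fin n → ℝ) : Prop :=
  ∃ C : NNReal, (∀ x ∈ Ω, ‖T x‖ ≤ C) ∧ LipschitzOnWith C T Ω

/-- `T ∈ W^{2,∞}(Ω)`: `T` is bounded with bounded Lipschitz derivative on `Ω`. -/
def MemW2inf {n N : ℕ} (Ω : Set (EVec n)) (T : EVec n → Fin N → Fin n → ℝ) : Prop :=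
  ∃ (C : NNReal) (DT : EVec n → EVec n →L[ℝ] (Fin N → Fin n → ℝ)),
    (∀ x ∈ Ω, ‖T x‖ ≤ C) ∧ (∀ x ∈ Ω, HasFDerivWithinAt T (DT x) Ω x) ∧
    (∀ x ∈ Ω, ‖DT x‖ ≤ C) ∧ LipschitzOnWith C DT Ω

/-- The nonlinear map `A(z) = f'(|z|) z / |z|` (equal to `0` at `z = 0`). -/
noncomputable def Amap {N n : ℕ} (f' : ℝ → ℝ) (z : Fin N → Fin n → ℝ) :
    Fin N → Fin n → ℝ :=
  fun a i => (f' (mnorm z) / mnorm z) * z a i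

/-- `u` is a weak solution of the Neumann problem for the integrand `f(|·|)` and datum `T₀`. -/
def IsWeakSolution {n N : ℕ} (Ω : Set (EVec n)) (f' : ℝ → ℝ)
    (T₀ : EVec n → Fin N → Fin n → ℝ)
    (u : EVec n → Fin N → ℝ) (Du : EVec n → Fin N → Fin n → ℝ) : Prop :=
  HasWeakDerivOn Ω u Du ∧
  ∀ φ Dφ, HasWeakDerivOn Ω φ Dφ →
    ∫ x in Ω, mdot (Amap f' (Du x)) (Dφ x) = ∫ x in Ω, mdot (T₀ x) (Dφ x)

/-- The functional `𝔉[w] = ∫_Ω (f(|∇w|) − T₀ · ∇w) dx` (as a function of the gradient). -/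
noncomputable def FF {n N : ℕ} (Ω : Set (EVec n)) (f : ℝ → ℝ)
    (T₀ : EVec n → Fin N → Fin n → ℝ) (Du : EVec n → Fin N → Fin n → ℝ) : ℝ :=
  ∫ x in Ω, (f (mnorm (Du x)) - mdot (T₀ x) (Du x))

/-- The regularised functional `𝔉_k[w] = 𝔉[w] + (2k)⁻¹ ∫_Ω |∇w|² dx`. -/
noncomputable def FFk {n N : ℕ} (Ω : Set (EVec n)) (f : ℝ → ℝ)
    (T₀ : EVec n → Fin N → Fin n → ℝ) (k : ℕ)
    (Du : EVec n → Fin N → Fin n → ℝ) : ℝ :=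
  FF Ω f T₀ Du + (2 * (k : ℝ))⁻¹ * ∫ x in Ω, mnorm (Du x) ^ 2

end

/-- The functional `𝓕[w] = ∫_Ω (F(∇w) − T₀·∇w) dx` for a general integrand `F`. -/
noncomputable def FFgen {n N : ℕ} (Ω : Set (EVec n)) (F : (Fin N → Fin n → ℝ) → ℝ)
    (T₀ : EVec n → Fin N → Fin n → ℝ) (Du : EVec n → Fin N → Fin n → ℝ) : ℝ :=
  ∫ x in Ω, (F (Du x) - mdot (T₀ x) (Du x))

/-- The elementary matrix with a `1` in position `(a,i)`. -/
def basisMat {N n : ℕ} (a : Fin N) (i : Fin n) : Fin N → Fin n → ℝ :=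
  fun a' i' => if a' = a ∧ i' = i then 1 else 0

/-- The gradient `D_z F(z)` of `F : ℝ^{N×n} → ℝ`, as a matrix. -/
noncomputable def DFmat {N n : ℕ} (F : (Fin N → Fin n → ℝ) → ℝ)
    (z : Fin N → Fin n → ℝ) : Fin N → Fin n → ℝ :=
  fun a i => fderiv ℝ F z (basisMat a i)

/-- `χ ∈ L^∞_⊥(Ω;ℝ^{N×n})`: a bounded measurable matrix field which annihilates all
`W^{1,1}`-gradients. -/
def MemLinfPerp {n N : ℕ} (Ω : Set (EVec n)) (χ : EVec n → Fin N → Fin n → ℝ) : Prop :=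
  AEStronglyMeasurable χ (volume.restrict Ω) ∧ (∃ C : ℝ, ∀ x ∈ Ω, mnorm (χ x) ≤ C) ∧
  ∀ (w : EVec n → Fin N → ℝ) (Dw : EVec n → Fin N → Fin n → ℝ),
    HasWeakDerivOn Ω w Dw → ∫ x in Ω, mdot (χ x) (Dw x) = 0

/-- The shifted convex conjugate `F*(z*) + F(0) = sup_w (z*·w − F(w) + F(0)) ∈ [0,∞]`,
valued in `ℝ≥0∞` so that infeasible points (`F*(z*) = ∞`) are handled correctly. -/
noncomputable def FstarShift {N n : ℕ} (F : (Fin N → Fin n → ℝ) → ℝ)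
    (z : Fin N → Fin n → ℝ) : ℝ≥0∞ :=
  ⨆ w : Fin N → Fin n → ℝ, ENNReal.ofReal (mdot z w - F w + F 0)

/-- The dual functional `ℛ_{T₀}[χ] = −∫_Ω F*(T₀+χ) dx`, valued in `EReal` (it equals
`F(0)·|Ω| − ∫_Ω (F*(T₀+χ) + F(0)) dx`, where the last integrand is nonnegative and the
value is `−∞` if `F*(T₀+χ)` is not integrable). -/
noncomputable def Rdual {n N : ℕ} (Ω : Set (EVec n)) (F : (Fin N → Fin n → ℝ) → ℝ)
    (T₀ χ : EVec n → Fin N → Fin n → ℝ) : EReal :=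
  ((F 0 * (volume Ω).toReal : ℝ) : EReal) -
    ((∫⁻ x in Ω, FstarShift F (T₀ x + χ x) : ℝ≥0∞) : EReal)

section helpers

variable {N n : ℕ}

lemma mdot_comm' (A B : Fin N → Fin n → ℝ) : mdot A B = mdot B A := by
  simp [mdot, mul_comm]

lemma mdot_add_left (A B C : Fin N → Fin n → ℝ) : mdot (A + B) C = mdot A C + mdot B C := by
  simp [mdot, add_mul, Finset.sum_add_distrib]

lemma mdot_sub_left (A B C : Fin N → Fin n → ℝ) : mdot (A - B) C = mdot A C - mdot B C := by
  simp [mdot, sub_mul, Finset.sum_sub_distrib]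

lemma mdot_add_right (A B C : Fin N → Fin n → ℝ) : mdot A (B + C) = mdot A B + mdot A C := by
  simp [mdot, mul_add, Finset.sum_add_distrib]

lemma mdot_sub_right (A B C : Fin N → Fin n → ℝ) : mdot A (B - C) = mdot A B - mdot A C := by
  simp [mdot, mul_sub, Finset.sum_sub_distrib]

lemma mdot_smul_right (c : ℝ) (A B : Fin N → Fin n → ℝ) : mdot A (c • B) = c * mdot A B := by
  simp [mdot, Finset.mul_sum, mul_left_comm]

lemma mdot_smul_left (c : ℝ) (A B : Fin N → Fin n → ℝ) : mdot (c • A) B = c * mdot A B := by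
  simp [mdot, Finset.mul_sum, mul_assoc]

lemma mdot_zero_right (A : Fin N → Fin n → ℝ) : mdot A 0 = 0 := by simp [mdot]

lemma mdot_self_nonneg (A : Fin N → Fin n → ℝ) : 0 ≤ mdot A A :=
  Finset.sum_nonneg fun a _ => Finset.sum_nonneg fun i _ => mul_self_nonneg _

lemma mnorm_nonneg' (A : Fin N → Fin n → ℝ) : 0 ≤ mnorm A := Real.sqrt_nonneg _

lemma mnorm_zero' : mnorm (0 : Fin N → Fin n → ℝ) = 0 := by simp [mnorm, mdot]

lemma mnorm_smul' (c : ℝ) (hc : 0 ≤ c) (A : Fin N → Fin n → ℝ) :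
    mnorm (c • A) = c * mnorm A := by
  rw [mnorm, mdot_smul_left, mdot_smul_right, ← mul_assoc, Real.sqrt_mul (by positivity),
    Real.sqrt_mul_self hc, mnorm]

lemma mdot_eq_prod (A B : Fin N → Fin n → ℝ) :
    mdot A B = ∑ p : Fin N × Fin n, A p.1 p.2 * B p.1 p.2 := by
  rw [mdot, Fintype.sum_prod_type]

lemma mdot_le (A B : Fin N → Fin n → ℝ) : mdot A B ≤ mnorm A * mnorm B := by
  rw [mnorm, mnorm, mdot_eq_prod, mdot_eq_prod, mdot_eq_prod]
  have := Real.sum_mul_le_sqrt_mul_sqrt Finset.univ (fun p : Fin N × Fin n => A p.1 p.2)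
    (fun p => B p.1 p.2)
  simpa only [sq] using this

lemma mnorm_neg' (A : Fin N → Fin n → ℝ) : mnorm (-A) = mnorm A := by
  simp [mnorm, mdot]

lemma abs_mdot_le (A B : Fin N → Fin n → ℝ) : |mdot A B| ≤ mnorm A * mnorm B := by
  rw [abs_le]
  refine ⟨?_, mdot_le A B⟩
  have h := mdot_le (-A) B
  rw [mnorm_neg'] at h
  have : mdot (-A) B = - mdot A B := by simp [mdot]
  linarith

lemma mnorm_sq (A : Fin N → Fin n → ℝ) : mnorm A ^ 2 = mdot A A :=
  Real.sq_sqrt (mdot_self_nonneg A)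

lemma mnorm_add_le (A B : Fin N → Fin n → ℝ) : mnorm (A + B) ≤ mnorm A + mnorm B := by
  have h1 := mnorm_sq (A + B)
  rw [mdot_add_left, mdot_add_right, mdot_add_right, mdot_comm' B A, ← mnorm_sq A, ← mnorm_sq B] at h1
  have := mdot_le A B
  have := mnorm_nonneg' A
  have := mnorm_nonneg' B
  nlinarith [mnorm_nonneg' (A + B)]

lemma norm_le_mnorm (A : Fin N → Fin n → ℝ) : ‖A‖ ≤ mnorm A := by
  refine (pi_norm_le_iff_of_nonneg (mnorm_nonneg' A)).2 fun a =>
    (pi_norm_le_iff_of_nonneg (mnorm_nonneg' A)).2 fun i => ?_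
  rw [Real.norm_eq_abs, mnorm, ← Real.sqrt_sq_eq_abs]
  apply Real.sqrt_le_sqrt
  rw [mdot_eq_prod, sq]
  exact Finset.single_le_sum (f := fun p : Fin N × Fin n => A p.1 p.2 * A p.1 p.2)
    (fun p _ => mul_self_nonneg _) (Finset.mem_univ (a, i))

lemma abs_mdot_le_norm (A B : Fin N → Fin n → ℝ) : |mdot A B| ≤ (N * n : ℝ) * (‖A‖ * ‖B‖) := by
  rw [mdot_eq_prod]
  refine (Finset.abs_sum_le_sum_abs _ _).trans ?_
  have : ∀ p ∈ (Finset.univ : Finset (Fin N × Fin n)), |A p.1 p.2 * B p.1 p.2| ≤ ‖A‖ * ‖B‖ := by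
    intro p _
    rw [abs_mul]
    gcongr
    · exact (norm_le_pi_norm (A p.1) p.2).trans (norm_le_pi_norm A p.1)
    · exact (norm_le_pi_norm (B p.1) p.2).trans (norm_le_pi_norm B p.1)
  refine (Finset.sum_le_card_nsmul _ _ _ this).trans ?_
  simp

/-- comparison constant -/
def cNn (N n : ℕ) : ℝ := N * n + 1

lemma cNn_pos : 0 < cNn N n := by unfold cNn; positivity

lemma mnorm_le_norm (A : Fin N → Fin n → ℝ) : mnorm A ≤ cNn N n * ‖A‖ := by
  have h := (le_abs_self _).trans (abs_mdot_le_norm A A)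
  rw [mnorm]
  apply Real.sqrt_le_iff.2
  have h0 : (0:ℝ) ≤ N * n := by positivity
  refine ⟨by unfold cNn; positivity, h.trans ?_⟩
  unfold cNn
  nlinarith [mul_nonneg (norm_nonneg A) (norm_nonneg A), mul_nonneg h0 (mul_nonneg (norm_nonneg A) (norm_nonneg A)), mul_nonneg (mul_nonneg h0 h0) (mul_nonneg (norm_nonneg A) (norm_nonneg A))]

lemma abs_mdot_le_norm' (A B : Fin N → Fin n → ℝ) : |mdot A B| ≤ cNn N n * (‖A‖ * ‖B‖) := by
  refine (abs_mdot_le_norm A B).trans ?_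
  gcongr
  unfold cNn; linarith

lemma continuous_mdot : Continuous fun p : (Fin N → Fin n → ℝ) × (Fin N → Fin n → ℝ) =>
    mdot p.1 p.2 := by
  unfold mdot; fun_prop

lemma continuous_mnorm : Continuous (mnorm : (Fin N → Fin n → ℝ) → ℝ) :=
  Real.continuous_sqrt.comp (continuous_mdot.comp (continuous_id.prodMk continuous_id))

lemma eq_sum_basisMat (w : Fin N → Fin n → ℝ) :
    w = ∑ a, ∑ i, w a i • basisMat a i := by
  ext b j
  simp only [Finset.sum_apply, Pi.smul_apply, basisMat, smul_eq_mul, mul_ite, mul_one, mul_zero]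
  rw [Finset.sum_eq_single b, Finset.sum_eq_single j] <;> simp +contextual [eq_comm]

lemma linear_eq_mdot (l : (Fin N → Fin n → ℝ) →L[ℝ] ℝ) (w : Fin N → Fin n → ℝ) :
    l w = mdot (fun a i => l (basisMat a i)) w := by
  conv_lhs => rw [eq_sum_basisMat w]
  simp [mdot, map_sum, mul_comm]

lemma fderiv_eq_mdot (F : (Fin N → Fin n → ℝ) → ℝ) (z w : Fin N → Fin n → ℝ) :
    fderiv ℝ F z w = mdot (DFmat F z) w := linear_eq_mdot _ _

lemma mdot_basisMat (A : Fin N → Fin n → ℝ) (a : Fin N) (i : Fin n) :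
    mdot A (basisMat a i) = A a i := by
  simp only [mdot, basisMat, mul_ite, mul_one, mul_zero]
  rw [Finset.sum_eq_single a, Finset.sum_eq_single i] <;> simp +contextual

lemma convex_subgrad {F : (Fin N → Fin n → ℝ) → ℝ} (hF : ContDiff ℝ 1 F)
    (hc : ConvexOn ℝ univ F) (z w : Fin N → Fin n → ℝ) :
    F z + mdot (DFmat F z) (w - z) ≤ F w := by
  have hd : HasFDerivAt F (fderiv ℝ F z) z := (hF.differentiable one_ne_zero z).hasFDerivAt
  let φ : ℝ → ℝ := fun t => F (z + t • (w - z))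
  have hφ : ConvexOn ℝ univ φ := by
    have := hc.comp_affineMap (AffineMap.lineMap z w)
    refine this.congr ?_ |>.subset (subset_univ _) convex_univ
    intro t _
    simp [φ, AffineMap.lineMap_apply, add_comm]
  have hφd : HasDerivAt φ (mdot (DFmat F z) (w - z)) 0 := by
    rw [← fderiv_eq_mdot]
    have h1 : HasDerivAt (fun t : ℝ => z + t • (w - z)) (w - z) 0 := by
      simpa using ((hasDerivAt_id (0:ℝ)).smul_const (w - z)).const_add z
    have hd' : HasFDerivAt F (fderiv ℝ F z) (z + (0:ℝ) • (w - z)) := by simpa using hd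
    exact hd'.comp_hasDerivAt 0 h1
  have := hφ.le_slope_of_hasDerivAt (mem_univ 0) (mem_univ 1) zero_lt_one hφd
  simp only [slope_def_field, φ] at this
  simp at this
  linarith

lemma mnorm_DF_le {F : (Fin N → Fin n → ℝ) → ℝ} (hF : ContDiff ℝ 1 F)
    (hc : ConvexOn ℝ univ F) {L : ℝ} (hL : 0 < L) (hpos : ∀ z, 0 ≤ F z)
    (hg : ∀ z, F z ≤ L * (1 + mnorm z)) (z : Fin N → Fin n → ℝ) :
    mnorm (DFmat F z) ≤ L := by
  by_contra hlt
  push Not at hlt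
  set η := DFmat F z with hη
  have hη0 : 0 < mnorm η := hL.trans hlt
  have key : ∀ s : ℝ, 0 ≤ s → s * (mnorm η * (mnorm η - L)) ≤ L * (1 + mnorm z) := by
    intro s hs
    have h1 := convex_subgrad hF hc z (z + s • η)
    have h2 := hg (z + s • η)
    have h3 := mnorm_add_le z (s • η)
    rw [mnorm_smul' s hs] at h3
    rw [add_sub_cancel_left, mdot_smul_right, ← hη, ← mnorm_sq] at h1
    have h4 := hpos z
    nlinarith [mul_le_mul_of_nonneg_left h3 hL.le]
  have hp : 0 < mnorm η * (mnorm η - L) := mul_pos hη0 (by linarith)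
  have h5 := key ((L * (1 + mnorm z) + 1) / (mnorm η * (mnorm η - L)))
    (by have := mnorm_nonneg' z; positivity)
  rw [div_mul_cancel₀ _ hp.ne'] at h5
  linarith

lemma F_lip {F : (Fin N → Fin n → ℝ) → ℝ} (hF : ContDiff ℝ 1 F)
    (hc : ConvexOn ℝ univ F) {L : ℝ} (hL : 0 < L) (hpos : ∀ z, 0 ≤ F z)
    (hg : ∀ z, F z ≤ L * (1 + mnorm z)) (z w : Fin N → Fin n → ℝ) :
    F z - F w ≤ L * mnorm (z - w) := by
  have h1 := convex_subgrad hF hc z w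
  have h2 := mdot_le (DFmat F z) (z - w)
  have h3 := mnorm_DF_le hF hc hL hpos hg z
  have h4 : mdot (DFmat F z) (w - z) = - mdot (DFmat F z) (z - w) := by
    rw [mdot_sub_right, mdot_sub_right]; ring
  nlinarith [mnorm_nonneg' (z - w)]

lemma continuous_DFmat {F : (Fin N → Fin n → ℝ) → ℝ} (hF : ContDiff ℝ 1 F) :
    Continuous (DFmat F) := by
  have := hF.continuous_fderiv one_ne_zero
  unfold DFmat
  fun_prop

lemma mnorm_sub_comm (A B : Fin N → Fin n → ℝ) : mnorm (A - B) = mnorm (B - A) := by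
  rw [← mnorm_neg', neg_sub]

lemma coercive {F : (Fin N → Fin n → ℝ) → ℝ} (hF : ContDiff ℝ 1 F)
    (hc : ConvexOn ℝ univ F) {L : ℝ} (hL : 0 < L) (hpos : ∀ z, 0 ≤ F z)
    (hg : ∀ z, F z ≤ L * (1 + mnorm z))
    (Finf : (Fin N → Fin n → ℝ) → ℝ)
    (hFinf : ∀ z, Filter.Tendsto (fun t : ℝ => t * F (t⁻¹ • z))
      (nhdsWithin 0 (Set.Ioi 0)) (nhds (Finf z))) (δ M : ℝ) (hδ : 0 < δ) :
    ∃ C : ℝ, ∀ A : Fin N → Fin n → ℝ, mnorm A ≤ M →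
      (∀ ξ : Fin N → Fin n → ℝ, mnorm ξ = 1 → δ ≤ Finf ξ - mdot A ξ) →
      ∀ z, (δ / 2) * mnorm z - C ≤ F z - mdot A z := by
  have hlip := F_lip hF hc hL hpos hg
  have hlipt : ∀ t : ℝ, 0 < t → ∀ ξ η : Fin N → Fin n → ℝ,
      t * F (t⁻¹ • ξ) - t * F (t⁻¹ • η) ≤ L * mnorm (ξ - η) := by
    intro t ht ξ η
    have := hlip (t⁻¹ • ξ) (t⁻¹ • η)
    rw [← smul_sub, mnorm_smul' _ (inv_pos.2 ht).le] at this
    have h2 := mul_le_mul_of_nonneg_left this ht.le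
    have h3 : t * (L * (t⁻¹ * mnorm (ξ - η))) = L * mnorm (ξ - η) := by field_simp
    linarith
  have hinflip : ∀ ξ η, Finf ξ - Finf η ≤ L * mnorm (ξ - η) := by
    intro ξ η
    refine le_of_tendsto ((hFinf ξ).sub (hFinf η)) ?_
    filter_upwards [self_mem_nhdsWithin] with t ht
    exact hlipt t ht ξ η
  have hK : IsCompact {ξ : Fin N → Fin n → ℝ | mnorm ξ = 1} := by
    refine Metric.isCompact_of_isClosed_isBounded (isClosed_eq continuous_mnorm continuous_const) ?_
    refine (Metric.isBounded_closedBall (x := (0 : Fin N → Fin n → ℝ)) (r := 1)).subset ?_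
    intro ξ hξ
    simpa using (norm_le_mnorm ξ).trans (le_of_eq hξ)
  have hev : ∀ᶠ t in 𝓝 (0:ℝ), ∀ ξ ∈ {ξ : Fin N → Fin n → ℝ | mnorm ξ = 1},
      0 < t → Finf ξ - δ / 2 ≤ t * F (t⁻¹ • ξ) := by
    refine hK.eventually_forall_of_forall_eventually ?_
    intro ξ₀ _
    have e1 : ∀ᶠ t in 𝓝 (0:ℝ), 0 < t → Finf ξ₀ - δ / 8 < t * F (t⁻¹ • ξ₀) := by
      have := (hFinf ξ₀).eventually (lt_mem_nhds (show Finf ξ₀ - δ / 8 < Finf ξ₀ by linarith))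
      rwa [eventually_nhdsWithin_iff] at this
    have e2 : ∀ᶠ ξ in 𝓝 ξ₀, L * mnorm (ξ - ξ₀) < δ / 8 := by
      have hcont : Continuous fun ξ => L * mnorm (ξ - ξ₀) :=
        continuous_const.mul (continuous_mnorm.comp (continuous_id.sub continuous_const))
      exact hcont.continuousAt.eventually_lt continuousAt_const (by simp [mnorm_zero', hδ])
    rw [nhds_prod_eq]
    filter_upwards [e1.prod_mk e2] with p hp hp0
    have h1 := hp.1 hp0
    have h2 := hp.2
    have h3 := hinflip p.2 ξ₀
    have h4 := hlipt p.1 hp0 ξ₀ p.2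
    rw [mnorm_sub_comm] at h4
    linarith
  obtain ⟨ε, hε, hball⟩ := Metric.eventually_nhds_iff.1 hev
  refine ⟨(δ / 2 + |M|) * (2 / ε), ?_⟩
  intro A hA hAξ z
  have hz0 := mnorm_nonneg' z
  by_cases hz : mnorm z ≤ 2 / ε
  · have h1 := mdot_le A z
    have h2 := hpos z
    have h3 : mnorm A * mnorm z ≤ |M| * mnorm z := by
      gcongr; exact hA.trans (le_abs_self M)
    have h4 : (δ / 2 + |M|) * mnorm z ≤ (δ / 2 + |M|) * (2 / ε) := by gcongr
    linarith
  · push Not at hz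
    have hzp : 0 < mnorm z := lt_trans (by positivity) hz
    have hu : mnorm ((mnorm z)⁻¹ • z) = 1 := by
      rw [mnorm_smul' _ (by positivity), inv_mul_cancel₀ hzp.ne']
    have h1 := hball (y := (mnorm z)⁻¹) (by
      rw [Real.dist_eq, sub_zero, abs_of_pos (by positivity)]
      rw [inv_lt_comm₀ hzp hε]
      have : ε⁻¹ ≤ 2 / ε := by rw [div_eq_mul_inv]; nlinarith [inv_pos.2 hε]
      linarith) _ hu (by positivity)
    rw [inv_inv, smul_smul, mul_inv_cancel₀ hzp.ne', one_smul] at h1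
    have h2 := hAξ _ hu
    rw [mdot_smul_right] at h2
    have h3 : (mnorm z)⁻¹ * (δ / 2 * mnorm z) = δ / 2 := by field_simp
    have h4 : 0 ≤ (mnorm z)⁻¹ * (F z - mdot A z - δ / 2 * mnorm z) := by
      rw [mul_sub, mul_sub, h3]; linarith
    have h5 := nonneg_of_mul_nonneg_right h4 (by positivity)
    have h6 : 0 ≤ (δ / 2 + |M|) * (2 / ε) := by positivity
    linarith

lemma riesz_L1_sets {α : Type*} [MeasurableSpace α] (μ : Measure α) [IsFiniteMeasure μ]
    (l : Lp ℝ 1 μ →L[ℝ] ℝ) :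
    ∃ g : α → ℝ, StronglyMeasurable g ∧ (∀ x, |g x| ≤ ‖l‖) ∧
      ∀ (s : Set α) (hs : MeasurableSet s),
        ∫ x in s, g x ∂μ = l (indicatorConstLp 1 hs (measure_ne_top μ s) (1:ℝ)) := by
  classical
  have hmono : ∀ f : Lp ℝ 2 μ, MemLp f 1 μ := fun f => (Lp.memLp f).mono_exponent (by norm_num)
  let J₀ : Lp ℝ 2 μ →ₗ[ℝ] Lp ℝ 1 μ :=
    { toFun := fun f => (hmono f).toLp f
      map_add' := by
        intro f g
        ext1
        filter_upwards [MemLp.coeFn_toLp (hmono (f + g)), MemLp.coeFn_toLp (hmono f),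
          MemLp.coeFn_toLp (hmono g), Lp.coeFn_add f g,
          Lp.coeFn_add ((hmono f).toLp f) ((hmono g).toLp g)] with x h1 h2 h3 h4 h5
        simp_all
      map_smul' := by
        intro c f
        ext1
        filter_upwards [MemLp.coeFn_toLp (hmono (c • f)), MemLp.coeFn_toLp (hmono f),
          Lp.coeFn_smul c f, Lp.coeFn_smul c ((hmono f).toLp f)] with x h1 h2 h3 h4
        simp_all }
  let K : ℝ≥0∞ := μ univ ^ (1 / (1:ℝ≥0∞).toReal - 1 / (2:ℝ≥0∞).toReal)
  have hK : K ≠ ∞ := by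
    refine ENNReal.rpow_ne_top_of_nonneg (by norm_num) (measure_ne_top _ _)
  let J : Lp ℝ 2 μ →L[ℝ] Lp ℝ 1 μ := J₀.mkContinuous K.toReal (by
    intro f
    change ‖(hmono f).toLp f‖ ≤ _
    rw [Lp.norm_toLp, Lp.norm_def, ← ENNReal.toReal_mul]
    refine ENNReal.toReal_mono (ENNReal.mul_ne_top hK (Lp.eLpNorm_ne_top f)) ?_
    rw [mul_comm]
    exact eLpNorm_le_eLpNorm_mul_rpow_measure_univ (by norm_num) (Lp.aestronglyMeasurable f))
  let g0 : Lp ℝ 2 μ := (InnerProductSpace.toDual ℝ (Lp ℝ 2 μ)).symm (l ∘L J)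
  have hg0int : Integrable g0 μ := memLp_one_iff_integrable.1 (hmono g0)
  have hind : ∀ s : Set α, ∀ hs : MeasurableSet s,
      ∫ x in s, g0 x ∂μ = l (indicatorConstLp 1 hs (measure_ne_top μ s) (1:ℝ)) := by
    intro s hs
    have h1 : inner ℝ g0 (indicatorConstLp 2 hs (measure_ne_top μ s) (1:ℝ)) =
        (l ∘L J) (indicatorConstLp 2 hs (measure_ne_top μ s) (1:ℝ)) :=
      InnerProductSpace.toDual_symm_apply
    rw [real_inner_comm, L2.inner_indicatorConstLp_one] at h1
    rw [h1]
    change l (J₀ _) = _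
    congr 1
    ext1
    change (hmono _).toLp _ =ᵐ[μ] _
    refine (MemLp.coeFn_toLp _).trans (indicatorConstLp_coeFn.trans indicatorConstLp_coeFn.symm)
  have hbd : ∀ s : Set α, MeasurableSet s → |∫ x in s, g0 x ∂μ| ≤ ‖l‖ * μ.real s := by
    intro s hs
    rw [hind s hs]
    have := l.le_opNorm (indicatorConstLp 1 hs (measure_ne_top μ s) (1:ℝ))
    rw [norm_indicatorConstLp (by norm_num) (by norm_num)] at this
    simpa using this
  have hle : g0 ≤ᵐ[μ] fun _ => ‖l‖ := by
    refine ae_le_of_forall_setIntegral_le hg0int (integrable_const _) ?_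
    intro s hs _
    have := (abs_le.1 (hbd s hs)).2
    simpa [mul_comm] using this
  have hge : (fun _ => -‖l‖) ≤ᵐ[μ] g0 := by
    refine ae_le_of_forall_setIntegral_le (integrable_const _) hg0int ?_
    intro s hs _
    have := (abs_le.1 (hbd s hs)).1
    simpa [mul_comm] using this
  let g1 : α → ℝ := (Lp.aestronglyMeasurable g0).mk g0
  let g : α → ℝ := fun x => max (-‖l‖) (min (g1 x) ‖l‖)
  have hg1 : StronglyMeasurable g1 := (Lp.aestronglyMeasurable g0).stronglyMeasurable_mk
  have hg : StronglyMeasurable g :=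
    stronglyMeasurable_const.sup (hg1.inf stronglyMeasurable_const)
  have hgb : ∀ x, |g x| ≤ ‖l‖ := by
    intro x
    have h0 := norm_nonneg l
    rw [abs_le]
    exact ⟨le_max_left _ _, max_le (by linarith) (min_le_right _ _)⟩
  have hgg0 : g =ᵐ[μ] g0 := by
    filter_upwards [(Lp.aestronglyMeasurable g0).ae_eq_mk, hle, hge] with x h1 h2 h3
    simp only [g, g1]
    rw [← h1, min_eq_left h2, max_eq_right h3]
  refine ⟨g, hg, hgb, fun s hs => ?_⟩
  rw [← hind s hs]
  exact integral_congr_ae (ae_restrict_of_ae hgg0)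

lemma riesz_L1 {α : Type*} [MeasurableSpace α] (μ : Measure α) [IsFiniteMeasure μ]
    (l : Lp ℝ 1 μ →L[ℝ] ℝ) :
    ∃ g : α → ℝ, StronglyMeasurable g ∧ (∀ x, |g x| ≤ ‖l‖) ∧
      ∀ (f : α → ℝ) (hf : Integrable f μ), l (hf.toL1 f) = ∫ x, g x * f x ∂μ := by
  obtain ⟨g, hg, hgb, hind⟩ := riesz_L1_sets μ l
  refine ⟨g, hg, hgb, ?_⟩
  have hgf : ∀ f : α → ℝ, Integrable f μ → Integrable (fun x => g x * f x) μ := fun f hf =>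
    hf.bdd_mul hg.aestronglyMeasurable (c := ‖l‖) (ae_of_all _ hgb)
  let l2₀ : Lp ℝ 1 μ →ₗ[ℝ] ℝ :=
    { toFun := fun f => ∫ x, g x * f x ∂μ
      map_add' := by
        intro f1 f2
        rw [← integral_add (hgf _ (L1.integrable_coeFn f1)) (hgf _ (L1.integrable_coeFn f2))]
        refine integral_congr_ae ?_
        filter_upwards [Lp.coeFn_add f1 f2] with x hx
        rw [hx, Pi.add_apply, mul_add]
      map_smul' := by
        intro c f1
        rw [smul_eq_mul, RingHom.id_apply, ← integral_const_mul]
        refine integral_congr_ae ?_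
        filter_upwards [Lp.coeFn_smul c f1] with x hx
        rw [hx, Pi.smul_apply, smul_eq_mul, mul_left_comm] }
  let l2 : Lp ℝ 1 μ →L[ℝ] ℝ := l2₀.mkContinuous ‖l‖ (by
    intro f
    change ‖∫ x, g x * f x ∂μ‖ ≤ _
    rw [L1.norm_eq_integral_norm, ← integral_const_mul]
    refine norm_integral_le_of_norm_le ((L1.integrable_coeFn f).norm.const_mul _) (ae_of_all _ ?_)
    intro x
    rw [norm_mul]
    gcongr
    exact hgb x)
  have heq : ∀ f : Lp ℝ 1 μ, l f = l2 f := by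
    intro f
    refine Lp.induction (by norm_num) (fun f : Lp ℝ 1 μ => l f = l2 f) ?_ ?_ ?_ f
    · intro c s hs hμs
      have e1 : (↑(Lp.simpleFunc.indicatorConst 1 hs hμs.ne c) : Lp ℝ 1 μ)
          = c • indicatorConstLp 1 hs (measure_ne_top μ s) (1:ℝ) := by
        rw [Lp.simpleFunc.coe_indicatorConst]
        ext1
        filter_upwards [indicatorConstLp_coeFn (p := 1) (hs := hs) (hμs := hμs.ne) (c := c),
          indicatorConstLp_coeFn (p := 1) (hs := hs) (hμs := measure_ne_top μ s) (c := (1:ℝ)),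
          Lp.coeFn_smul c (indicatorConstLp 1 hs (measure_ne_top μ s) (1:ℝ))] with x h1 h2 h3
        rw [h1, h3, Pi.smul_apply, h2]
        by_cases hx : x ∈ s <;> simp [hx]
      rw [e1, map_smul, map_smul, ← hind s hs]
      congr 1
      change _ = ∫ x, g x * _ ∂μ
      rw [← integral_indicator hs]
      refine integral_congr_ae ?_
      filter_upwards [indicatorConstLp_coeFn (p := 1) (hs := hs) (hμs := measure_ne_top μ s) (c := (1:ℝ))] with x h2
      rw [h2]
      by_cases hx : x ∈ s <;> simp [hx]
    · intro f g hf hg _ h1 h2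
      rw [map_add, map_add, h1, h2]
    · exact isClosed_eq l.continuous l2.continuous
  intro f hf
  rw [heq]
  change ∫ x, g x * _ ∂μ = _
  refine integral_congr_ae ?_
  filter_upwards [hf.coeFn_toL1] with x hx
  rw [hx]

lemma riesz_L1_mat {α : Type*} [MeasurableSpace α] (μ : Measure α) [IsFiniteMeasure μ]
    (l : Lp (Fin N → Fin n → ℝ) 1 μ →L[ℝ] ℝ) :
    ∃ (g : α → Fin N → Fin n → ℝ), StronglyMeasurable g ∧ (∃ C : ℝ, ∀ x, mnorm (g x) ≤ C) ∧
      ∀ (f : α → Fin N → Fin n → ℝ) (hf : Integrable f μ),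
        l (hf.toL1 f) = ∫ x, mdot (g x) (f x) ∂μ := by
  let li : Fin N → Fin n → Lp ℝ 1 μ →L[ℝ] ℝ := fun a i =>
    l ∘L ContinuousLinearMap.compLpL 1 μ
      (ContinuousLinearMap.toSpanSingleton ℝ (basisMat a i : Fin N → Fin n → ℝ))
  choose g hgm hgb hgi using fun a i => riesz_L1 μ (li a i)
  refine ⟨fun x a i => g a i x, ?_, ?_, ?_⟩
  · exact (measurable_pi_lambda _ fun a => measurable_pi_lambda _ fun i =>
      (hgm a i).measurable).stronglyMeasurable
  · let C0 : ℝ := ∑ a, ∑ i, ‖li a i‖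
    refine ⟨cNn N n * C0, fun x => (mnorm_le_norm _).trans ?_⟩
    refine mul_le_mul_of_nonneg_left ?_ cNn_pos.le
    have h0 : 0 ≤ C0 := by positivity
    refine (pi_norm_le_iff_of_nonneg h0).2 fun a => (pi_norm_le_iff_of_nonneg h0).2 fun i => ?_
    refine (hgb a i x).trans ?_
    refine le_trans (Finset.single_le_sum (f := fun i => ‖li a i‖) (fun _ _ => norm_nonneg _) (Finset.mem_univ i)) ?_
    exact Finset.single_le_sum (f := fun a => ∑ i, ‖li a i‖) (fun _ _ => by positivity) (Finset.mem_univ a)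
  · intro f hf
    have hfi : ∀ a i, Integrable (fun x => f x a i) μ := fun a i => (hf.eval a).eval i
    have e1 : hf.toL1 f = ∑ a, ∑ i, ContinuousLinearMap.compLpL 1 μ
        (ContinuousLinearMap.toSpanSingleton ℝ (basisMat a i : Fin N → Fin n → ℝ))
        ((hfi a i).toL1 _) := by
      ext1
      have h1 : ∀ a i, (ContinuousLinearMap.compLpL 1 μ
        (ContinuousLinearMap.toSpanSingleton ℝ (basisMat a i : Fin N → Fin n → ℝ))
        ((hfi a i).toL1 _) : Lp (Fin N → Fin n → ℝ) 1 μ) =ᵐ[μ] fun x => f x a i • basisMat a i := by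
        intro a i
        filter_upwards [ContinuousLinearMap.coeFn_compLp (ContinuousLinearMap.toSpanSingleton ℝ
          (basisMat a i : Fin N → Fin n → ℝ)) ((hfi a i).toL1 _), (hfi a i).coeFn_toL1] with x h1 h2
        change ((ContinuousLinearMap.toSpanSingleton ℝ
          (basisMat a i : Fin N → Fin n → ℝ)).compLp ((hfi a i).toL1 _) :
            Lp (Fin N → Fin n → ℝ) 1 μ) x = _
        rw [h1, h2]; simp
      have h1' := ae_all_iff.2 fun a => ae_all_iff.2 fun i => h1 a i
      have h2 := Lp.coeFn_finsetSum (μ := μ) (p := 1) Finset.univ (fun a => ∑ i, ContinuousLinearMap.compLpL 1 μ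
        (ContinuousLinearMap.toSpanSingleton ℝ (basisMat a i : Fin N → Fin n → ℝ))
        ((hfi a i).toL1 _))
      have h3 := ae_all_iff.2 fun a => Lp.coeFn_finsetSum (μ := μ) (p := 1) Finset.univ (fun i => ContinuousLinearMap.compLpL 1 μ
        (ContinuousLinearMap.toSpanSingleton ℝ (basisMat a i : Fin N → Fin n → ℝ))
        ((hfi a i).toL1 _))
      filter_upwards [hf.coeFn_toL1, h1', h2, h3] with x k1 k2 k3 k4
      rw [k1, k3]
      simp only [Finset.sum_apply, k4, k2]
      exact eq_sum_basisMat (f x)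
    rw [e1]
    simp only [map_sum]
    have e2 : ∀ a i, l (ContinuousLinearMap.compLpL 1 μ
        (ContinuousLinearMap.toSpanSingleton ℝ (basisMat a i : Fin N → Fin n → ℝ))
        ((hfi a i).toL1 _)) = ∫ x, g a i x * f x a i ∂μ := fun a i => hgi a i _ (hfi a i)
    simp only [e2, mdot]
    have hI : ∀ a i, Integrable (fun x => g a i x * f x a i) μ := fun a i =>
      (hfi a i).bdd_mul (hgm a i).aestronglyMeasurable (c := ‖li a i‖) (ae_of_all _ (hgb a i))
    rw [integral_finsetSum _ fun a _ => integrable_finsetSum _ fun i _ => hI a i]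
    refine Finset.sum_congr rfl fun a _ => ?_
    rw [integral_finsetSum _ fun i _ => hI a i]

lemma hb_duality {X : Type*} [NormedAddCommGroup X] [NormedSpace ℝ X] (Φ : X → ℝ)
    (hc : ConvexOn ℝ univ Φ) (hcont : Continuous Φ) (V : Submodule ℝ X) (m : ℝ)
    (hm : ∀ v ∈ V, m ≤ Φ v) :
    ∃ l : X →L[ℝ] ℝ, (∀ v ∈ V, l v = 0) ∧ ∀ v, m ≤ Φ v - l v := by
  let C : Set (X × ℝ) := {p | Φ p.1 < p.2}
  let D : Set (X × ℝ) := (V : Set X) ×ˢ {m}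
  have hC : Convex ℝ C := by
    have := hc.convex_strict_epigraph
    simpa [C] using this
  have hCo : IsOpen C := isOpen_lt (hcont.comp continuous_fst) continuous_snd
  have hD : Convex ℝ D := V.convex.prod (convex_singleton m)
  have hdisj : Disjoint C D := by
    rw [Set.disjoint_left]
    rintro ⟨v, t⟩ h1 ⟨h2, h3⟩
    simp only [mem_singleton_iff] at h3
    have := hm v h2
    simp only [C, mem_ofPred_eq] at h1
    linarith
  obtain ⟨f, u, hf1, hf2⟩ := geometric_hahn_banach_open hC hCo hD hdisj
  let l : X →L[ℝ] ℝ := f ∘L ContinuousLinearMap.inl ℝ X ℝ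
  let s : ℝ := f (0, 1)
  have hf : ∀ v t, f (v, t) = l v + s * t := by
    intro v t
    have : ((v, t) : X × ℝ) = (v, 0) + t • (0, 1) := by simp
    rw [this, map_add, map_smul, smul_eq_mul, mul_comm]
    rfl
  have h1 : ∀ v t, Φ v < t → l v + s * t < u := fun v t h => by
    rw [← hf]; exact hf1 _ h
  have h2 : ∀ v ∈ V, u ≤ l v + s * m := fun v hv => by
    rw [← hf]; exact hf2 _ ⟨hv, rfl⟩
  have hl0 : ∀ v ∈ V, l v = 0 := by
    intro v hv
    by_contra hne
    have := h2 ((((u - s * m) - 1) / l v) • v) (V.smul_mem _ hv)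
    rw [map_smul, smul_eq_mul, div_mul_cancel₀ _ hne] at this
    linarith
  have hsm : u ≤ s * m := by simpa using h2 0 V.zero_mem
  have hs : s < 0 := by
    have := h1 0 (max (Φ 0) m + 1) (by linarith [le_max_left (Φ 0) m])
    rw [map_zero, zero_add] at this
    have h3 : s * (max (Φ 0) m + 1 - m) < 0 := by linarith
    have h4 : 0 < max (Φ 0) m + 1 - m := by linarith [le_max_right (Φ 0) m]
    by_contra hs
    push Not at hs
    nlinarith [mul_nonneg hs h4.le]
  refine ⟨(-s)⁻¹ • l, fun v hv => by simp [hl0 v hv], fun v => ?_⟩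
  have h3 : l v + s * Φ v ≤ s * m := by
    refine le_of_forall_pos_le_add fun ε hε => ?_
    have := h1 v (Φ v + ε / (-s)) (by
      have : 0 < ε / (-s) := div_pos hε (by linarith)
      linarith)
    have h5 : s * (ε / (-s)) = - ε := by
      have : s ≠ 0 := hs.ne
      field_simp
    rw [mul_add, h5] at this
    linarith
  have h6 : 0 < -s := by linarith
  have h7 : (-s)⁻¹ * l v ≤ Φ v - m := by
    rw [inv_mul_le_iff₀ h6]; nlinarith
  simp only [_root_.smul_apply, smul_eq_mul]
  linarith

lemma integrable_F {α : Type*} [MeasurableSpace α] {μ : Measure α} [IsFiniteMeasure μ]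
    {F : (Fin N → Fin n → ℝ) → ℝ} {L : ℝ} (hL : 0 ≤ L)
    (hcF : Continuous F) (hlip : ∀ z w, F z - F w ≤ L * mnorm (z - w))
    {v : α → Fin N → Fin n → ℝ} (hv : Integrable v μ) :
    Integrable (fun x => F (v x)) μ := by
  refine Integrable.mono' (g := fun x => |F 0| + L * (cNn N n * ‖v x‖))
    ((integrable_const _).add ((hv.norm.const_mul _).const_mul _))
    (hcF.comp_aestronglyMeasurable hv.1) (ae_of_all _ fun x => ?_)
  have h1 := hlip (v x) 0
  have h2 := hlip 0 (v x)
  rw [mnorm_sub_comm] at h2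
  rw [sub_zero] at h1 h2
  have h3 := mul_le_mul_of_nonneg_left (mnorm_le_norm (v x)) hL
  rw [Real.norm_eq_abs, abs_le]
  have h4 := abs_le.1 (le_refl |F 0|)
  constructor <;> linarith

lemma aesm_mdot {α : Type*} [MeasurableSpace α] {μ : Measure α}
    {A v : α → Fin N → Fin n → ℝ} (hA : AEStronglyMeasurable A μ) 
    (hv : AEStronglyMeasurable v μ) :
    AEStronglyMeasurable (fun x => mdot (A x) (v x)) μ := by
  have hpm : AEStronglyMeasurable (fun x => (A x, v x)) μ := hA.prodMk hv
  have := Continuous.comp_aestronglyMeasurable (g := fun p : (Fin N → Fin n → ℝ) × (Fin N → Fin n → ℝ) => mdot p.1 p.2) continuous_mdot hpm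
  exact this

lemma integrable_mdot {α : Type*} [MeasurableSpace α] {μ : Measure α}
    {A : α → Fin N → Fin n → ℝ} (hA : AEStronglyMeasurable A μ) {M : ℝ}
    (hAM : ∀ᵐ x ∂μ, mnorm (A x) ≤ M)
    {v : α → Fin N → Fin n → ℝ} (hv : Integrable v μ) :
    Integrable (fun x => mdot (A x) (v x)) μ := by
  have h1 : Integrable (fun x => M * (cNn N n * ‖v x‖)) μ := (hv.norm.const_mul _).const_mul _
  refine h1.mono' (aesm_mdot hA hv.1) ?_
  filter_upwards [hAM] with x hx
  rw [Real.norm_eq_abs]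
  exact (abs_mdot_le _ _).trans
    (mul_le_mul hx (mnorm_le_norm _) (mnorm_nonneg' _) ((mnorm_nonneg' _).trans hx))

lemma strong_dual {α : Type*} [MeasurableSpace α] {μ : Measure α} [IsFiniteMeasure μ]
    {F : (Fin N → Fin n → ℝ) → ℝ} {L : ℝ} (hL : 0 ≤ L)
    (hcF : Continuous F) (hlip : ∀ z w, F z - F w ≤ L * mnorm (z - w))
    (hconv : ConvexOn ℝ univ F)
    {T : α → Fin N → Fin n → ℝ} (hT : AEStronglyMeasurable T μ) {M : ℝ} (hM : 0 ≤ M)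
    (hTM : ∀ᵐ x ∂μ, mnorm (T x) ≤ M)
    (V : Submodule ℝ (Lp (Fin N → Fin n → ℝ) 1 μ)) (m : ℝ)
    (hm : ∀ v ∈ V, m ≤ ∫ x, (F (v x) - mdot (T x) (v x)) ∂μ) :
    ∃ χ : α → Fin N → Fin n → ℝ, StronglyMeasurable χ ∧ (∃ C : ℝ, ∀ x, mnorm (χ x) ≤ C) ∧
      (∀ (v : α → Fin N → Fin n → ℝ) (hv : Integrable v μ), hv.toL1 v ∈ V →
        ∫ x, mdot (χ x) (v x) ∂μ = 0) ∧
      ∀ (v : α → Fin N → Fin n → ℝ), Integrable v μ →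
        m ≤ ∫ x, (F (v x) - mdot (T x + χ x) (v x)) ∂μ := by
  let Φ : Lp (Fin N → Fin n → ℝ) 1 μ → ℝ := fun v => ∫ x, (F (v x) - mdot (T x) (v x)) ∂μ
  have hI : ∀ v : α → Fin N → Fin n → ℝ, Integrable v μ →
      Integrable (fun x => F (v x) - mdot (T x) (v x)) μ := fun v hv =>
    (integrable_F hL hcF hlip hv).sub (integrable_mdot hT hTM hv)
  have hI' : ∀ v : Lp (Fin N → Fin n → ℝ) 1 μ,
      Integrable (fun x => F (v x) - mdot (T x) (v x)) μ := fun v => hI _ (L1.integrable_coeFn v)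
  have hΦc : ConvexOn ℝ univ Φ := by
    refine ⟨convex_univ, fun v _ w _ a b ha hb hab => ?_⟩
    simp only [Φ, smul_eq_mul]
    rw [← integral_const_mul, ← integral_const_mul,
      ← integral_add ((hI' v).const_mul a) ((hI' w).const_mul b)]
    refine integral_mono_ae (hI' _) (((hI' v).const_mul a).add ((hI' w).const_mul b)) ?_
    filter_upwards [Lp.coeFn_add (a • v) (b • w), Lp.coeFn_smul a v, Lp.coeFn_smul b w]
      with x h1 h2 h3
    rw [h1, Pi.add_apply, h2, h3, Pi.smul_apply, Pi.smul_apply, mdot_add_right, mdot_smul_right,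
      mdot_smul_right]
    have := hconv.2 (mem_univ (v x)) (mem_univ (w x)) ha hb hab
    simp only [smul_eq_mul] at this
    linarith
  have hΦl : ∀ v w, Φ v - Φ w ≤ ((L + M) * cNn N n) * dist v w := by
    intro v w
    rw [dist_eq_norm, L1.norm_eq_integral_norm, ← integral_const_mul, ← integral_sub (hI' v) (hI' w)]
    refine integral_mono_ae ((hI' v).sub (hI' w))
      ((L1.integrable_coeFn (v - w)).norm.const_mul _) ?_
    filter_upwards [Lp.coeFn_sub v w, hTM] with x h1 h2
    rw [h1, Pi.sub_apply]
    have h3 := hlip (v x) (w x)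
    have h4 := (abs_le.1 (abs_mdot_le (T x) (v x - w x))).1
    rw [mdot_sub_right] at h4
    have h5 := mnorm_le_norm (v x - w x)
    have h6 := mul_le_mul_of_nonneg_right h2 (mnorm_nonneg' (v x - w x))
    have h7 := mul_le_mul_of_nonneg_left h5 (add_nonneg hL hM)
    simp only [Pi.sub_apply] at *
    linarith
  have hΦcont : Continuous Φ := by
    have hK : 0 ≤ (L + M) * cNn N n := mul_nonneg (add_nonneg hL hM) cNn_pos.le
    refine (LipschitzWith.of_dist_le_mul (K := ⟨_, hK⟩) fun v w => ?_).continuous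
    rw [Real.dist_eq, abs_le]
    have h1 := hΦl v w
    have h2 := hΦl w v
    rw [dist_comm] at h2
    constructor
    · change -((L + M) * cNn N n * dist v w) ≤ _
      linarith
    · exact h1
  obtain ⟨l, hl1, hl2⟩ := hb_duality Φ hΦc hΦcont V m hm
  obtain ⟨χ, hχ, ⟨C, hC⟩, hrep⟩ := riesz_L1_mat μ l
  refine ⟨χ, hχ, ⟨C, hC⟩, fun v hv hvV => by rw [← hrep v hv, hl1 _ hvV], fun v hv => ?_⟩
  have h1 := hl2 (hv.toL1 v)
  rw [hrep v hv] at h1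
  have h2 : Φ (hv.toL1 v) = ∫ x, (F (v x) - mdot (T x) (v x)) ∂μ := by
    refine integral_congr_ae ?_
    filter_upwards [hv.coeFn_toL1] with x hx
    rw [hx]
  rw [h2, ← integral_sub (hI v hv)
    (integrable_mdot hχ.aestronglyMeasurable (ae_of_all _ hC) hv)] at h1
  refine h1.trans (le_of_eq (integral_congr_ae (ae_of_all _ fun x => ?_)))
  simp only [mdot_add_left]
  ring

/-- selection of almost maximisers -/
noncomputable def selV (F : (Fin N → Fin n → ℝ) → ℝ) {α : Type*} (ζ : α → Fin N → Fin n → ℝ)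
    (w : ℕ → Fin N → Fin n → ℝ) : ℕ → α → Fin N → Fin n → ℝ
  | 0 => fun _ => 0
  | j + 1 => {x | mdot (ζ x) (selV F ζ w j x) - F (selV F ζ w j x) ≤
      mdot (ζ x) (w j) - F (w j)}.piecewise (fun _ => w j) (selV F ζ w j)

lemma interchange {α : Type*} [MeasurableSpace α] {μ : Measure α} [IsFiniteMeasure μ]
    {F : (Fin N → Fin n → ℝ) → ℝ} {L : ℝ} (hL : 0 ≤ L)
    (hcF : Continuous F) (hlip : ∀ z w, F z - F w ≤ L * mnorm (z - w))
    {ζ : α → Fin N → Fin n → ℝ} (hζ : StronglyMeasurable ζ) {M : ℝ}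
    (hζM : ∀ᵐ x ∂μ, mnorm (ζ x) ≤ M) (m : ℝ)
    (hm : ∀ (v : α → Fin N → Fin n → ℝ), Integrable v μ →
        m ≤ ∫ x, (F (v x) - mdot (ζ x) (v x)) ∂μ) :
    ∫⁻ x, FstarShift F (ζ x) ∂μ ≤ ENNReal.ofReal (F 0 * μ.real univ - m) := by
  classical
  let w : ℕ → Fin N → Fin n → ℝ := TopologicalSpace.denseSeq _
  let v := selV F ζ w
  let a : α → (Fin N → Fin n → ℝ) → ℝ := fun x z => mdot (ζ x) z - F z + F 0
  have hv0 : v 0 = fun _ => 0 := rfl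
  have hvs : ∀ j, v (j + 1) = {x | mdot (ζ x) (v j x) - F (v j x) ≤
      mdot (ζ x) (w j) - F (w j)}.piecewise (fun _ => w j) (v j) := fun j => rfl
  have hmeas : ∀ z : α → Fin N → Fin n → ℝ, Measurable z →
      Measurable fun x => mdot (ζ x) (z x) - F (z x) := fun z hz =>
    (continuous_mdot.measurable.comp (hζ.measurable.prodMk hz)).sub (hcF.measurable.comp hz)
  have hset : ∀ j, Measurable (v j) → MeasurableSet {x | mdot (ζ x) (v j x) - F (v j x) ≤
      mdot (ζ x) (w j) - F (w j)} := fun j hj =>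
    measurableSet_le (hmeas _ hj) (hmeas (fun _ => w j) measurable_const)
  have hvm : ∀ j, Measurable (v j) := by
    intro j
    induction j with
    | zero => rw [hv0]; exact measurable_const
    | succ j ih =>
      rw [hvs]
      exact Measurable.piecewise (hset j ih) measurable_const ih
  have hvi : ∀ j, Integrable (v j) μ := by
    intro j
    induction j with
    | zero => rw [hv0]; exact integrable_const _
    | succ j ih =>
      rw [hvs]
      exact Integrable.piecewise (hset j (hvm j)) (integrable_const _).integrableOn ih.integrableOn
  have hstep : ∀ j x, a x (v j x) ≤ a x (v (j+1) x) ∧ a x (w j) ≤ a x (v (j+1) x) := by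
    intro j x
    rw [hvs]
    by_cases hx : x ∈ {x | mdot (ζ x) (v j x) - F (v j x) ≤ mdot (ζ x) (w j) - F (w j)}
    · rw [Set.piecewise_eq_of_mem _ _ _ hx]
      simp only [mem_ofPred_eq] at hx
      simp only [a]
      exact ⟨by linarith, le_rfl⟩
    · rw [Set.piecewise_eq_of_notMem _ _ _ hx]
      simp only [mem_ofPred_eq, not_le] at hx
      simp only [a]
      exact ⟨le_rfl, by linarith⟩
  have hmono : ∀ x, Monotone fun j => a x (v j x) := fun x =>
    monotone_nat_of_le_succ fun j => (hstep j x).1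
  have hnn : ∀ j x, 0 ≤ a x (v j x) := by
    intro j x
    refine le_trans (le_of_eq ?_) (hmono x (Nat.zero_le j))
    simp [a, hv0, mdot_zero_right]
  have hle : ∀ x, FstarShift F (ζ x) ≤ ⨆ j, ENNReal.ofReal (a x (v j x)) := by
    intro x
    refine iSup_le fun z => ?_
    have hcl : IsClosed {z | ENNReal.ofReal (a x z) ≤ ⨆ j, ENNReal.ofReal (a x (v j x))} := by
      refine isClosed_le (ENNReal.continuous_ofReal.comp ?_) continuous_const
      exact ((continuous_mdot.comp (continuous_const.prodMk continuous_id)).sub hcF).add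
        continuous_const
    have hd : closure (Set.range w) = univ := (TopologicalSpace.denseRange_denseSeq _).closure_eq
    have hsub : Set.range w ⊆ {z | ENNReal.ofReal (a x z) ≤ ⨆ j, ENNReal.ofReal (a x (v j x))} := by
      rintro _ ⟨j, rfl⟩
      exact (ENNReal.ofReal_le_ofReal (hstep j x).2).trans
        (le_iSup (fun j => ENNReal.ofReal (a x (v j x))) (j+1))
    have := closure_minimal hsub hcl
    rw [hd] at this
    exact this (mem_univ z)
  refine (lintegral_mono hle).trans ?_
  rw [lintegral_iSup (fun j => ((hmeas _ (hvm j)).add_const _).ennreal_ofReal)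
    (fun i j hij x => ENNReal.ofReal_le_ofReal (hmono x hij))]
  refine iSup_le fun j => ?_
  have hint : Integrable (fun x => mdot (ζ x) (v j x) - F (v j x)) μ :=
    (integrable_mdot hζ.aestronglyMeasurable hζM (hvi j)).sub (integrable_F hL hcF hlip (hvi j))
  change ∫⁻ x, ENNReal.ofReal (mdot (ζ x) (v j x) - F (v j x) + F 0) ∂μ ≤ _
  have hint2 : Integrable (fun x => mdot (ζ x) (v j x) - F (v j x) + F 0) μ :=
    hint.add (integrable_const _)
  rw [← ofReal_integral_eq_lintegral_ofReal hint2
    (ae_of_all _ fun x => hnn j x)]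
  refine ENNReal.ofReal_le_ofReal ?_
  rw [integral_add hint (integrable_const _), integral_const]
  have h1 := hm _ (hvi j)
  have h2 : ∫ x, (F (v j x) - mdot (ζ x) (v j x)) ∂μ =
      - ∫ x, (mdot (ζ x) (v j x) - F (v j x)) ∂μ := by
    rw [← integral_neg]; congr 1; ext x; ring
  rw [h2] at h1
  simp only [smul_eq_mul]
  linarith

lemma ptwise {F : (Fin N → Fin n → ℝ) → ℝ} (hF : ContDiff ℝ 1 F)
    (ζ : Fin N → Fin n → ℝ) (s : ℝ) (hnn : ∀ z, 0 ≤ s + F z - mdot ζ z) (R ε : ℝ) (hε : 0 < ε) :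
    ∃ δ > 0, ∀ z, ‖z‖ ≤ R → s + F z - mdot ζ z < δ → mnorm (DFmat F z - ζ) < ε := by
  have hmc : Continuous fun z => mdot ζ z :=
    continuous_mdot.comp (continuous_const.prodMk continuous_id)
  have hhc : Continuous fun z => s + F z - mdot ζ z :=
    (continuous_const.add hF.continuous).sub hmc
  have hzero : ∀ z, s + F z - mdot ζ z = 0 → DFmat F z = ζ := by
    intro z hz
    have hmin : IsLocalMin (fun z => s + F z - mdot ζ z) z :=
      Filter.Eventually.of_forall fun w => by simpa only [hz] using hnn w
    let l₀ : (Fin N → Fin n → ℝ) →ₗ[ℝ] ℝ :=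
      { toFun := fun w => mdot ζ w
        map_add' := fun a b => mdot_add_right _ _ _
        map_smul' := fun c a => mdot_smul_right _ _ _ }
    let l : (Fin N → Fin n → ℝ) →L[ℝ] ℝ := ⟨l₀, hmc⟩
    have hd : HasFDerivAt (fun z => s + F z - mdot ζ z) (fderiv ℝ F z - l) z := by
      have h1 := ((hF.differentiable one_ne_zero z).hasFDerivAt).const_add s
      exact h1.sub l.hasFDerivAt
    have h0 := hmin.hasFDerivAt_eq_zero hd
    ext a i
    have h1 := congrArg (fun q : (Fin N → Fin n → ℝ) →L[ℝ] ℝ => q (basisMat a i)) h0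
    have h2 : fderiv ℝ F z (basisMat a i) - mdot ζ (basisMat a i) = 0 := h1
    rw [mdot_basisMat] at h2
    exact sub_eq_zero.1 h2
  have hDc : Continuous fun z => mnorm (DFmat F z - ζ) :=
    continuous_mnorm.comp ((continuous_DFmat hF).sub continuous_const)
  let K : Set (Fin N → Fin n → ℝ) := Metric.closedBall 0 R ∩ {z | ε ≤ mnorm (DFmat F z - ζ)}
  have hK : IsCompact K := (isCompact_closedBall 0 R).inter_right (isClosed_le continuous_const hDc)
  by_cases hKe : K.Nonempty
  · obtain ⟨z₀, hz₀, hmin⟩ := hK.exists_isMinOn hKe hhc.continuousOn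
    refine ⟨s + F z₀ - mdot ζ z₀, ?_, fun z hz hlt => ?_⟩
    · refine lt_of_le_of_ne (hnn z₀) fun h => ?_
      have h1 : ε ≤ mnorm (DFmat F z₀ - ζ) := hz₀.2
      rw [hzero z₀ h.symm, sub_self, mnorm_zero'] at h1
      linarith
    · by_contra hcon
      push Not at hcon
      have h1 : s + F z₀ - mdot ζ z₀ ≤ s + F z - mdot ζ z := hmin ⟨by simpa using hz, hcon⟩
      linarith
  · refine ⟨1, one_pos, fun z hz _ => ?_⟩
    by_contra hcon
    push Not at hcon
    exact hKe ⟨z, by simpa using hz, hcon⟩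

lemma trunc_tendsto {α E : Type*} [MeasurableSpace α] {μ : Measure α} [IsFiniteMeasure μ]
    [NormedAddCommGroup E] {Q : ℕ → α → ℝ} {y : ℕ → α → E} {B : α → ℝ} {C : ℝ}
    (hQm : ∀ k, AEStronglyMeasurable (Q k) μ) (hB : Integrable B μ)
    (hQB : ∀ k, ∀ᵐ x ∂μ, |Q k x| ≤ B x) (hy : ∀ k, Integrable (y k) μ)
    (hC : ∀ k, ∫ x, ‖y k x‖ ∂μ ≤ C)
    (hlim : ∀ R : ℝ, ∀ᵐ x ∂μ,
      Tendsto (fun k => {x | ‖y k x‖ < R}.indicator (Q k) x) atTop (𝓝 0)) :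
    Tendsto (fun k => ∫⁻ x, ‖Q k x‖ₑ ∂μ) atTop (𝓝 0) := by
  have hBfin : ∫⁻ x, ‖B x‖ₑ ∂μ ≠ ∞ := hB.2.ne
  have hQB' : ∀ k, ∀ᵐ x ∂μ, ‖Q k x‖ₑ ≤ ‖B x‖ₑ := by
    intro k
    filter_upwards [hQB k] with x hx
    exact enorm_le_iff_norm_le.2 (hx.trans (le_abs_self _))
  have hC0 : 0 ≤ C := (integral_nonneg fun x => norm_nonneg _).trans (hC 0)
  rw [ENNReal.tendsto_nhds_zero]
  intro ε hε
  have hε2 : ε / 2 ≠ 0 := (ENNReal.half_pos hε.ne').ne'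
  obtain ⟨η, hη, hηs⟩ := exists_pos_setLIntegral_lt_of_measure_lt hBfin hε2
  obtain ⟨r, hr0, hr⟩ : ∃ r : ℝ, 0 < r ∧ ENNReal.ofReal r ≤ η := by
    rcases eq_or_ne η ∞ with h | h
    · exact ⟨1, one_pos, by simp [h]⟩
    · exact ⟨η.toReal, ENNReal.toReal_pos hη.ne' h, by rw [ENNReal.ofReal_toReal h]⟩
  let R : ℝ := (C + 1) / r
  have hR : 0 < R := by positivity
  have hms : ∀ k, μ {x | R ≤ ‖y k x‖} < η := by
    intro k
    have h1 := mul_meas_ge_le_integral_of_nonneg (ae_of_all μ fun x => norm_nonneg (y k x))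
      (hy k).norm R
    have h2 : R * μ.real {x | R ≤ ‖y k x‖} < R * r := by
      have : R * r = C + 1 := by simp only [R]; field_simp
      have := hC k
      linarith
    have h3 := lt_of_mul_lt_mul_left h2 hR.le
    refine lt_of_lt_of_le ?_ hr
    rw [← ENNReal.ofReal_toReal (measure_ne_top μ {x | R ≤ ‖y k x‖})]
    exact (ENNReal.ofReal_lt_ofReal_iff hr0).2 h3
  have hns : ∀ k, NullMeasurableSet {x | ‖y k x‖ < R} μ := fun k =>
    nullMeasurableSet_lt (hy k).1.norm.aemeasurable aemeasurable_const
  have hns' : ∀ k, NullMeasurableSet {x | R ≤ ‖y k x‖} μ := fun k =>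
    nullMeasurableSet_le aemeasurable_const (hy k).1.norm.aemeasurable
  have hI : ∀ k, AEMeasurable (fun x => ‖{x | ‖y k x‖ < R}.indicator (Q k) x‖ₑ) μ := fun k =>
    ((hQm k).aemeasurable.indicator₀ (hns k)).enorm
  have hdct : Tendsto (fun k => ∫⁻ x, ‖{x | ‖y k x‖ < R}.indicator (Q k) x‖ₑ ∂μ) atTop (𝓝 0) := by
    have := tendsto_lintegral_of_dominated_convergence' (μ := μ)
      (F := fun k x => ‖{x | ‖y k x‖ < R}.indicator (Q k) x‖ₑ) (f := fun _ => 0)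
      (fun x => ‖B x‖ₑ) hI (fun k => by
        filter_upwards [hQB' k] with x hx
        exact (enorm_indicator_le_enorm_self _ _).trans hx) hBfin (by
        filter_upwards [hlim R] with x hx
        simpa using hx.enorm)
    simpa using this
  filter_upwards [ENNReal.tendsto_nhds_zero.1 hdct (ε / 2) (ENNReal.half_pos hε.ne')] with k hk
  have hsplit : ∀ᵐ x ∂μ, ‖Q k x‖ₑ ≤ ‖{x | ‖y k x‖ < R}.indicator (Q k) x‖ₑ +
      {x | R ≤ ‖y k x‖}.indicator (fun x => ‖B x‖ₑ) x := by
    filter_upwards [hQB' k] with x hx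
    by_cases h : ‖y k x‖ < R
    · rw [Set.indicator_of_mem (show x ∈ {x | ‖y k x‖ < R} from h)]
      exact le_self_add
    · rw [Set.indicator_of_mem (show x ∈ {x | R ≤ ‖y k x‖} from not_lt.1 h)]
      exact hx.trans le_add_self
  calc ∫⁻ x, ‖Q k x‖ₑ ∂μ ≤ ∫⁻ x, (‖{x | ‖y k x‖ < R}.indicator (Q k) x‖ₑ +
      {x | R ≤ ‖y k x‖}.indicator (fun x => ‖B x‖ₑ) x) ∂μ := lintegral_mono_ae hsplit
    _ = ∫⁻ x, ‖{x | ‖y k x‖ < R}.indicator (Q k) x‖ₑ ∂μ +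
        ∫⁻ x in {x | R ≤ ‖y k x‖}, ‖B x‖ₑ ∂μ := by
      rw [lintegral_add_left' (hI k), lintegral_indicator₀ (hns' k)]
    _ ≤ ε / 2 + ε / 2 := add_le_add hk (hηs _ (hms k)).le
    _ = ε := ENNReal.add_halves ε

lemma measurable_FstarShift {F : (Fin N → Fin n → ℝ) → ℝ} : Measurable (FstarShift F) := by
  refine LowerSemicontinuous.measurable (lowerSemicontinuous_iSup fun w => ?_)
  refine (ENNReal.continuous_ofReal.comp ?_).lowerSemicontinuous
  exact ((continuous_mdot.comp (continuous_id.prodMk continuous_const)).sub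
    continuous_const).add continuous_const

lemma dual_conv {α : Type*} [MeasurableSpace α] {μ : Measure α} [IsFiniteMeasure μ]
    {F : (Fin N → Fin n → ℝ) → ℝ} {L : ℝ} (hL : 0 ≤ L) (hF : ContDiff ℝ 1 F)
    (hlip : ∀ z w, F z - F w ≤ L * mnorm (z - w)) (hDF : ∀ z, mnorm (DFmat F z) ≤ L)
    {T σ : α → Fin N → Fin n → ℝ} (hT : AEStronglyMeasurable T μ) (hσ : AEStronglyMeasurable σ μ)
    {M M' : ℝ} (hTM : ∀ᵐ x ∂μ, mnorm (T x) ≤ M) (hσM : ∀ᵐ x ∂μ, mnorm (σ x) ≤ M')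
    {m : ℝ} (hm0 : m ≤ F 0 * μ.real univ)
    (hS : ∫⁻ x, FstarShift F (T x + σ x) ∂μ ≤ ENNReal.ofReal (F 0 * μ.real univ - m))
    {v : ℕ → α → Fin N → Fin n → ℝ} (hv : ∀ k, Integrable (v k) μ)
    (hσv : ∀ k, ∫ x, mdot (σ x) (v k x) ∂μ = 0)
    (htend : Tendsto (fun k => ∫ x, (F (v k x) - mdot (T x) (v k x)) ∂μ) atTop (𝓝 m))
    {C : ℝ} (hC : ∀ k, ∫ x, ‖v k x‖ ∂μ ≤ C)
    {g : α → Fin N → Fin n → ℝ} (hg : Integrable g μ) :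
    Tendsto (fun k => ∫ x, mdot (DFmat F (v k x) - T x) (g x) ∂μ) atTop
      (𝓝 (∫ x, mdot (σ x) (g x) ∂μ)) := by
  have hSfin : ∫⁻ x, FstarShift F (T x + σ x) ∂μ ≠ ∞ := ne_top_of_le_ne_top ENNReal.ofReal_ne_top hS
  have hζ : AEStronglyMeasurable (fun x => T x + σ x) μ := hT.add hσ
  have hSm : AEMeasurable (fun x => FstarShift F (T x + σ x)) μ :=
    measurable_FstarShift.comp_aemeasurable hζ.aemeasurable
  have hSae := ae_lt_top' hSm hSfin
  let S : α → ℝ := fun x => (FstarShift F (T x + σ x)).toReal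
  have hSi : Integrable S μ := integrable_toReal_of_lintegral_ne_top hSm hSfin
  have hSint : ∫ x, S x ∂μ ≤ F 0 * μ.real univ - m := by
    simp only [S]
    rw [integral_toReal hSm hSae]
    exact ENNReal.toReal_le_of_le_ofReal (by linarith) hS
  have hSnn : ∀ᵐ x ∂μ, ∀ z, 0 ≤ (S x - F 0) + F z - mdot (T x + σ x) z := by
    filter_upwards [hSae] with x hx z
    have h1 : ENNReal.ofReal (mdot (T x + σ x) z - F z + F 0) ≤ FstarShift F (T x + σ x) :=
      le_iSup (fun w => ENNReal.ofReal (mdot (T x + σ x) w - F w + F 0)) z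
    have h2 := (ENNReal.ofReal_le_iff_le_toReal hx.ne).1 h1
    simp only [S]
    linarith
  let G : ℕ → α → ℝ := fun k x => (S x - F 0) + F (v k x) - mdot (T x + σ x) (v k x)
  have hFi : ∀ k, Integrable (fun x => F (v k x) - mdot (T x) (v k x)) μ := fun k =>
    (integrable_F hL hF.continuous hlip (hv k)).sub (integrable_mdot hT hTM (hv k))
  have hσi : ∀ k, Integrable (fun x => mdot (σ x) (v k x)) μ := fun k =>
    integrable_mdot hσ hσM (hv k)
  have hGe : ∀ k, G k = fun x => ((S x - F 0) + (F (v k x) - mdot (T x) (v k x))) -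
      mdot (σ x) (v k x) := by
    intro k; ext x; simp only [G, mdot_add_left]; ring
  have hS0 : Integrable (fun x => S x - F 0) μ := hSi.sub (integrable_const _)
  have hGi : ∀ k, Integrable (G k) μ := by
    intro k
    rw [hGe k]
    exact (hS0.add (hFi k)).sub (hσi k)
  have hGint : ∀ k, ∫ x, G k x ∂μ ≤ (∫ x, (F (v k x) - mdot (T x) (v k x)) ∂μ) - m := by
    intro k
    rw [hGe k]
    rw [integral_sub (f := fun x => (S x - F 0) + (F (v k x) - mdot (T x) (v k x)))
      (hS0.add (hFi k)) (hσi k), hσv k, integral_add hS0 (hFi k),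
      integral_sub hSi (integrable_const _), integral_const]
    simp only [smul_eq_mul]
    linarith
  have hGnn : ∀ k, ∀ᵐ x ∂μ, 0 ≤ G k x := by
    intro k
    filter_upwards [hSnn] with x hx
    exact hx (v k x)
  have hGlim : Tendsto (fun k => ∫ x, G k x ∂μ) atTop (𝓝 0) := by
    refine tendsto_of_tendsto_of_tendsto_of_le_of_le tendsto_const_nhds ?_
      (fun k => integral_nonneg_of_ae (hGnn k)) hGint
    simpa using htend.sub_const m
  have hGL : Tendsto (fun k => eLpNorm (G k - fun _ => 0) 1 μ) atTop (𝓝 0) := by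
    have h1 : ∀ k, eLpNorm (G k - fun _ => 0) 1 μ = ENNReal.ofReal (∫ x, G k x ∂μ) := by
      intro k
      rw [eLpNorm_one_eq_lintegral_enorm, ofReal_integral_eq_lintegral_ofReal (hGi k) (hGnn k)]
      refine lintegral_congr_ae ?_
      filter_upwards [hGnn k] with x hx
      simp only [Pi.sub_apply, sub_zero]
      exact Real.enorm_eq_ofReal hx
    simp only [h1]
    simpa using ENNReal.tendsto_ofReal hGlim
  refine tendsto_of_subseq_tendsto fun ns hns => ?_
  have hmeas : TendstoInMeasure μ (fun k => G (ns k)) atTop (fun _ => (0:ℝ)) :=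
    tendstoInMeasure_of_tendsto_eLpNorm one_ne_zero (fun k => (hGi _).1)
      aestronglyMeasurable_const (hGL.comp hns)
  obtain ⟨ms, -, hae⟩ := hmeas.exists_seq_tendsto_ae
  refine ⟨ms, ?_⟩
  let y : ℕ → α → Fin N → Fin n → ℝ := fun k => v (ns (ms k))
  have hDm : ∀ k, AEStronglyMeasurable (fun x => DFmat F (y k x) - T x) μ := fun k =>
    ((continuous_DFmat hF).comp_aestronglyMeasurable (hv _).1).sub hT
  have hDb : ∀ k, ∀ᵐ x ∂μ, mnorm (DFmat F (y k x) - T x) ≤ L + M := by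
    intro k
    filter_upwards [hTM] with x hx
    have h1 := mnorm_add_le (DFmat F (y k x)) (-(T x))
    rw [mnorm_neg', ← sub_eq_add_neg] at h1
    linarith [hDF (y k x)]
  have hQi1 : ∀ k, Integrable (fun x => mdot (DFmat F (y k x) - T x) (g x)) μ := fun k =>
    integrable_mdot (hDm k) (hDb k) hg
  have hQi2 : Integrable (fun x => mdot (σ x) (g x)) μ := integrable_mdot hσ hσM hg
  refine tendsto_integral_of_L1 _ hQi2.1 (Filter.Eventually.of_forall hQi1) ?_
  have hQeq : ∀ k x, mdot (DFmat F (y k x) - T x) (g x) - mdot (σ x) (g x) =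
      mdot (DFmat F (y k x) - (T x + σ x)) (g x) := by
    intro k x
    simp only [mdot_sub_left, mdot_add_left]; ring
  refine trunc_tendsto (y := y) (B := fun x => (L + M + M') * (cNn N n * ‖g x‖)) (C := C)
    (fun k => ((hQi1 k).sub hQi2).1) ((hg.norm.const_mul _).const_mul _) ?_ (fun k => hv _)
    (fun k => hC _) ?_
  · intro k
    filter_upwards [hDb k, hσM] with x h1 h2
    have h3 := abs_mdot_le (DFmat F (y k x) - T x) (g x)
    have h4 := abs_mdot_le (σ x) (g x)
    have h5 := mnorm_nonneg' (g x)
    have h6 := mul_le_mul_of_nonneg_right h1 h5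
    have h7 := mul_le_mul_of_nonneg_right h2 h5
    have h8 : 0 ≤ L + M + M' := by
      linarith [mnorm_nonneg' (DFmat F (y k x) - T x), mnorm_nonneg' (σ x)]
    have h9 := mul_le_mul_of_nonneg_left (mnorm_le_norm (g x)) h8
    have h10 := abs_sub (mdot (DFmat F (y k x) - T x) (g x)) (mdot (σ x) (g x))
    linarith
  · intro R
    filter_upwards [hae, hSnn] with x h1 h2
    rw [Metric.tendsto_atTop]
    intro ε hε
    have hg1 : 0 < mnorm (g x) + 1 := by linarith [mnorm_nonneg' (g x)]
    obtain ⟨δ, hδ, hδz⟩ := ptwise hF (T x + σ x) (S x - F 0) h2 R (ε / (mnorm (g x) + 1))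
      (div_pos hε hg1)
    have h3 : ∀ᶠ k in atTop, G (ns (ms k)) x < δ := h1.eventually (gt_mem_nhds hδ)
    obtain ⟨k₀, hk₀⟩ := eventually_atTop.1 h3
    refine ⟨k₀, fun k hk => ?_⟩
    rw [dist_zero_right]
    by_cases hx : x ∈ {x | ‖y k x‖ < R}
    · rw [Set.indicator_of_mem hx, hQeq, Real.norm_eq_abs]
      have h4 := hδz (y k x) (le_of_lt hx) (hk₀ k hk)
      have h5 := abs_mdot_le (DFmat F (y k x) - (T x + σ x)) (g x)
      rw [lt_div_iff₀ hg1] at h4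
      nlinarith [mnorm_nonneg' (DFmat F (y k x) - (T x + σ x)), mnorm_nonneg' (g x)]
    · rw [Set.indicator_of_notMem hx, norm_zero]
      exact hε

lemma weak_test_integrable {Ω : Set (EVec n)} {u : EVec n → Fin N → ℝ}
    {Du : EVec n → Fin N → Fin n → ℝ} (h : HasWeakDerivOn Ω u Du)
    {φ : EVec n → ℝ} (hφ : ContDiff ℝ 1 φ) (hc : HasCompactSupport φ) (a : Fin N) (i : Fin n) :
    Integrable (fun x => u x a * fderiv ℝ φ x (EuclideanSpace.single i 1)) (volume.restrict Ω) ∧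
    Integrable (fun x => Du x a i * φ x) (volume.restrict Ω) := by
  have h1 : Integrable u (volume.restrict Ω) := h.1
  have h2 : Integrable Du (volume.restrict Ω) := h.2.1
  have hcd : Continuous fun x => fderiv ℝ φ x (EuclideanSpace.single i 1) :=
    (hφ.continuous_fderiv one_ne_zero).clm_apply continuous_const
  have hcs : HasCompactSupport fun x => fderiv ℝ φ x (EuclideanSpace.single i 1) :=
    hc.fderiv_apply ℝ _
  obtain ⟨C1, hC1⟩ := hcs.exists_bound_of_continuous hcd
  obtain ⟨C2, hC2⟩ := hc.exists_bound_of_continuous hφ.continuous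
  exact ⟨(h1.eval a).mul_bdd hcd.aestronglyMeasurable (c := C1) (ae_of_all _ hC1),
    ((h2.eval a).eval i).mul_bdd hφ.continuous.aestronglyMeasurable (c := C2) (ae_of_all _ hC2)⟩

lemma weak_zero {Ω : Set (EVec n)} :
    HasWeakDerivOn Ω (0 : EVec n → Fin N → ℝ) (0 : EVec n → Fin N → Fin n → ℝ) := by
  refine ⟨integrableOn_zero, integrableOn_zero, fun φ _ _ _ a i => ?_⟩
  simp

lemma weak_add {Ω : Set (EVec n)} {u w : EVec n → Fin N → ℝ}
    {Du Dw : EVec n → Fin N → Fin n → ℝ} (hu : HasWeakDerivOn Ω u Du)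
    (hw : HasWeakDerivOn Ω w Dw) : HasWeakDerivOn Ω (u + w) (Du + Dw) := by
  refine ⟨hu.1.add hw.1, hu.2.1.add hw.2.1, fun φ hφ hc hs a i => ?_⟩
  obtain ⟨a1, a2⟩ := weak_test_integrable hu hφ hc a i
  obtain ⟨b1, b2⟩ := weak_test_integrable hw hφ hc a i
  simp only [Pi.add_apply, add_mul]
  rw [integral_add a1 b1, integral_add a2 b2, hu.2.2 φ hφ hc hs a i, hw.2.2 φ hφ hc hs a i]
  ring

lemma weak_smul {Ω : Set (EVec n)} {u : EVec n → Fin N → ℝ}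
    {Du : EVec n → Fin N → Fin n → ℝ} (c : ℝ) (hu : HasWeakDerivOn Ω u Du) :
    HasWeakDerivOn Ω (c • u) (c • Du) := by
  refine ⟨hu.1.smul c, hu.2.1.smul c, fun φ hφ hc hs a i => ?_⟩
  simp only [Pi.smul_apply, smul_eq_mul, mul_assoc]
  rw [integral_const_mul, integral_const_mul, hu.2.2 φ hφ hc hs a i]
  ring

/-- gradients as a subspace of `L¹` -/
noncomputable def gradSub (N : ℕ) (Ω : Set (EVec n)) :
    Submodule ℝ (Lp (Fin N → Fin n → ℝ) 1 ((volume : Measure (EVec n)).restrict Ω)) where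
  carrier := {v | ∃ (w : EVec n → Fin N → ℝ) (Dw : EVec n → Fin N → Fin n → ℝ),
    HasWeakDerivOn Ω w Dw ∧ v =ᵐ[(volume : Measure (EVec n)).restrict Ω] Dw}
  zero_mem' := ⟨0, 0, weak_zero, Lp.coeFn_zero _ _ _⟩
  add_mem' := by
    rintro v v' ⟨w, Dw, h, e⟩ ⟨w', Dw', h', e'⟩
    exact ⟨_, _, weak_add h h', (Lp.coeFn_add v v').trans (e.add e')⟩
  smul_mem' := by
    rintro c v ⟨w, Dw, h, e⟩
    exact ⟨_, _, weak_smul c h, (Lp.coeFn_smul c v).trans (e.const_smul c)⟩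

lemma ae_eq_of_forall_mdot {α : Type*} [MeasurableSpace α] {μ : Measure α} [IsFiniteMeasure μ]
    {σ χ : α → Fin N → Fin n → ℝ} (hσ : AEStronglyMeasurable σ μ) (hχ : AEStronglyMeasurable χ μ)
    {M M' : ℝ} (hσM : ∀ᵐ x ∂μ, mnorm (σ x) ≤ M) (hχM : ∀ᵐ x ∂μ, mnorm (χ x) ≤ M')
    (h : ∀ g : α → Fin N → Fin n → ℝ, Integrable g μ →
      ∫ x, mdot (χ x) (g x) ∂μ = ∫ x, mdot (σ x) (g x) ∂μ) : χ =ᵐ[μ] σ := by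
  have hi : Integrable (fun x => χ x - σ x) μ := by
    refine Integrable.mono' (integrable_const (M' + M)) (hχ.sub hσ) ?_
    filter_upwards [hσM, hχM] with x h1 h2
    exact (norm_sub_le _ _).trans (add_le_add ((norm_le_mnorm _).trans h2)
      ((norm_le_mnorm _).trans h1))
  have h1 := h _ hi
  have i1 := integrable_mdot hχ hχM hi
  have i2 := integrable_mdot hσ hσM hi
  have h2 : ∫ x, mdot (χ x - σ x) (χ x - σ x) ∂μ = 0 := by
    simp only [mdot_sub_left (χ _) (σ _)]
    rw [integral_sub i1 i2, h1, sub_self]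
  have i3 : Integrable (fun x => mdot (χ x - σ x) (χ x - σ x)) μ := by
    simp only [mdot_sub_left (χ _) (σ _)]
    exact i1.sub i2
  rw [integral_eq_zero_iff_of_nonneg (fun x => mdot_self_nonneg _) i3] at h2
  filter_upwards [h2] with x hx
  have h3 : mnorm (χ x - σ x) = 0 := by
    rw [mnorm, hx]; simp
  have h4 := norm_le_mnorm (χ x - σ x)
  rw [h3] at h4
  exact sub_eq_zero.1 (norm_le_zero_iff.1 h4)

lemma ofReal_integral_le_aux {α : Type*} [MeasurableSpace α] {μ : Measure α} {f : α → ℝ}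
    (hf : Integrable f μ) :
    ENNReal.ofReal (∫ x, f x ∂μ) ≤ ∫⁻ x, ENNReal.ofReal (f x) ∂μ := by
  have h1 : ∫ x, f x ∂μ ≤ ∫ x, max (f x) 0 ∂μ :=
    integral_mono hf hf.pos_part (fun x => le_max_left _ _)
  refine (ENNReal.ofReal_le_ofReal h1).trans ?_
  rw [ofReal_integral_eq_lintegral_ofReal hf.pos_part (ae_of_all _ fun x => le_max_right _ _)]
  refine lintegral_mono fun x => ?_
  rcases le_total (f x) 0 with h | h
  · simp [max_eq_right h]
  · simp [max_eq_left h]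

lemma ereal_cancel (c : ℝ) (a b : EReal) (h : (c : EReal) - a = c - b) : a = b := by
  have h3 := congrArg (fun z : EReal => (c : EReal) - z) h
  simp only [sub_eq_add_neg (c : EReal) a, sub_eq_add_neg (c : EReal) b,
    EReal.sub_add_cancel_left, neg_neg] at h3
  exact h3

end helpers
/-- **Lemma 4.11.** Under the coerciveness condition, for any minimising sequence
`(u_k)` of `𝓕` in `W^{1,1}(Ω;ℝ^N)` the stresses `D_zF(∇u_k) − T₀` converge weakly-* in
`L^∞(Ω;ℝ^{N×n})` to the unique maximiser `σ` of the dual functional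
`ℛ_{T₀}[χ] = −∫_Ω F*(T₀+χ) dx` over `L^∞_⊥(Ω;ℝ^{N×n})`. -/
theorem minimising_sequence_dual_convergence
    {n N : ℕ} (Ω : Set (EVec n))
    (hΩ : IsLipschitzDomain Ω) (hΩbdd : Bornology.IsBounded Ω)
    (ν L : ℝ) (hν : 0 < ν) (hνL : ν ≤ L)
    (F : (Fin N → Fin n → ℝ) → ℝ)
    (hFpos : ∀ z, 0 ≤ F z)
    (hFC1 : ContDiff ℝ 1 F)
    (hFconv : ConvexOn ℝ Set.univ F)
    (hFgrowth : ∀ z, ν * mnorm z - L ≤ F z ∧ F z ≤ L * (1 + mnorm z))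
    (Finf : (Fin N → Fin n → ℝ) → ℝ)
    (hFinf : ∀ z, Filter.Tendsto (fun t : ℝ => t * F (t⁻¹ • z))
      (nhdsWithin 0 (Set.Ioi 0)) (nhds (Finf z)))
    (T₀ : EVec n → Fin N → Fin n → ℝ)
    (hTmeas : AEStronglyMeasurable T₀ (volume.restrict Ω))
    (hTbdd : ∃ M : ℝ, ∀ x ∈ Ω, mnorm (T₀ x) ≤ M)
    -- coerciveness: `ess inf_{x∈Ω} min_{|ξ|=1} (F^∞(ξ) − T₀(x)·ξ) > 0`
    (hcoerc : ∃ δ₀ : ℝ, 0 < δ₀ ∧ ∀ᵐ x ∂(volume.restrict Ω),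
      ∀ ξ : Fin N → Fin n → ℝ, mnorm ξ = 1 → δ₀ ≤ Finf ξ - mdot (T₀ x) ξ)
    (u : ℕ → EVec n → Fin N → ℝ) (Du : ℕ → EVec n → Fin N → Fin n → ℝ)
    (hu : ∀ k, HasWeakDerivOn Ω (u k) (Du k))
    -- `(u_k)` is a minimising sequence for `𝓕` in `W^{1,1}(Ω;ℝ^N)`
    (hminseq : Filter.Tendsto (fun k => FFgen Ω F T₀ (Du k)) Filter.atTop
      (nhds (sInf {r : ℝ | ∃ (w : EVec n → Fin N → ℝ)
        (Dw : EVec n → Fin N → Fin n → ℝ),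
        HasWeakDerivOn Ω w Dw ∧ r = FFgen Ω F T₀ Dw}))) :
    ∃ σ : EVec n → Fin N → Fin n → ℝ, MemLinfPerp Ω σ ∧
      (∀ χ : EVec n → Fin N → Fin n → ℝ, MemLinfPerp Ω χ →
        Rdual Ω F T₀ χ ≤ Rdual Ω F T₀ σ) ∧
      (∀ χ : EVec n → Fin N → Fin n → ℝ, MemLinfPerp Ω χ →
        Rdual Ω F T₀ χ = Rdual Ω F T₀ σ → χ =ᵐ[volume.restrict Ω] σ) ∧
      -- weak-* convergence in `L^∞(Ω;ℝ^{N×n})`, tested against all of `L¹(Ω;ℝ^{N×n})`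
      ∀ g : EVec n → Fin N → Fin n → ℝ, IntegrableOn g Ω volume →
        Filter.Tendsto
          (fun k => ∫ x in Ω, mdot (DFmat F (Du k x) - T₀ x) (g x))
          Filter.atTop (nhds (∫ x in Ω, mdot (σ x) (g x))) := by
  have hL : 0 < L := lt_of_lt_of_le hν hνL
  have hΩm : MeasurableSet Ω := hΩ.1.measurableSet
  have hΩfin : volume Ω < ∞ := hΩbdd.measure_lt_top
  let μ : Measure (EVec n) := volume.restrict Ω
  haveI : IsFiniteMeasure μ := ⟨by simpa [μ] using hΩfin⟩
  have hμu : μ.real univ = (volume Ω).toReal := by simp [μ, Measure.real]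
  have hg' : ∀ z, F z ≤ L * (1 + mnorm z) := fun z => (hFgrowth z).2
  have hlip := F_lip hFC1 hFconv hL hFpos hg'
  have hDF := mnorm_DF_le hFC1 hFconv hL hFpos hg'
  have hcF := hFC1.continuous
  obtain ⟨M₀, hM₀⟩ := hTbdd
  let M : ℝ := |M₀|
  have hM : 0 ≤ M := abs_nonneg _
  have hTM : ∀ᵐ x ∂μ, mnorm (T₀ x) ≤ M :=
    (ae_restrict_iff' hΩm).2 (ae_of_all _ fun x hx => (hM₀ x hx).trans (le_abs_self _))
  obtain ⟨δ, hδ, hcoer⟩ := hcoerc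
  obtain ⟨C, hC⟩ := coercive hFC1 hFconv hL hFpos hg' Finf hFinf δ M hδ
  have hDi : ∀ w Dw, HasWeakDerivOn Ω (w : EVec n → Fin N → ℝ) Dw → Integrable Dw μ :=
    fun w Dw h => h.2.1
  have hFFi : ∀ v : EVec n → Fin N → Fin n → ℝ, Integrable v μ →
      Integrable (fun x => F (v x) - mdot (T₀ x) (v x)) μ := fun v hv =>
    (integrable_F hL.le hcF hlip hv).sub (integrable_mdot hTmeas hTM hv)
  have hcoI : ∀ v : EVec n → Fin N → Fin n → ℝ, Integrable v μ →
      (δ / 2) * (∫ x, ‖v x‖ ∂μ) - C * μ.real univ ≤ FFgen Ω F T₀ v := by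
    intro v hv
    have h1 : ∫ x, ((δ / 2) * ‖v x‖ - C) ∂μ ≤ ∫ x, (F (v x) - mdot (T₀ x) (v x)) ∂μ := by
      refine integral_mono_ae ((hv.norm.const_mul _).sub (integrable_const _)) (hFFi v hv) ?_
      filter_upwards [hTM, hcoer] with x hx1 hx2
      have h2 := hC (T₀ x) hx1 hx2 (v x)
      have h3 := mul_le_mul_of_nonneg_left (norm_le_mnorm (v x)) (half_pos hδ).le
      linarith
    rw [integral_sub (hv.norm.const_mul _) (integrable_const _), integral_const_mul,
      integral_const, smul_eq_mul, mul_comm (μ.real univ)] at h1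
    exact h1
  set 𝒮 : Set ℝ := {r : ℝ | ∃ (w : EVec n → Fin N → ℝ)
        (Dw : EVec n → Fin N → Fin n → ℝ),
        HasWeakDerivOn Ω w Dw ∧ r = FFgen Ω F T₀ Dw} with h𝒮
  set m : ℝ := sInf 𝒮 with hmdef
  have hbdd : BddBelow 𝒮 := by
    refine ⟨-(C * μ.real univ), ?_⟩
    rintro r ⟨w, Dw, h, rfl⟩
    have h1 := hcoI Dw (hDi w Dw h)
    have h2 : 0 ≤ (δ / 2) * (∫ x, ‖Dw x‖ ∂μ) :=
      mul_nonneg (half_pos hδ).le (integral_nonneg fun x => norm_nonneg _)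
    linarith
  have hmle : ∀ w Dw, HasWeakDerivOn Ω w Dw → m ≤ FFgen Ω F T₀ Dw := fun w Dw h =>
    csInf_le hbdd ⟨w, Dw, h, rfl⟩
  have hm0 : m ≤ F 0 * μ.real univ := by
    refine (hmle 0 0 weak_zero).trans (le_of_eq ?_)
    simp only [FFgen, Pi.zero_apply, mdot_zero_right, sub_zero]
    change ∫ x, F 0 ∂μ = _
    rw [integral_const, smul_eq_mul, mul_comm]
  -- bound on the minimising sequence
  obtain ⟨B, hB⟩ : ∃ B : ℝ, ∀ k, ∫ x, ‖Du k x‖ ∂μ ≤ B := by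
    obtain ⟨b, hb⟩ := hminseq.bddAbove_range
    refine ⟨(b + C * μ.real univ) / (δ / 2), fun k => ?_⟩
    have h1 := hcoI (Du k) (hDi _ _ (hu k))
    have h2 : FFgen Ω F T₀ (Du k) ≤ b := hb ⟨k, rfl⟩
    rw [le_div_iff₀ (half_pos hδ)]
    linarith
  -- convergence for every dual optimal field
  have hconv : ∀ χ : EVec n → Fin N → Fin n → ℝ, MemLinfPerp Ω χ →
      ∫⁻ x, FstarShift F (T₀ x + χ x) ∂μ ≤ ENNReal.ofReal (F 0 * μ.real univ - m) →
      ∀ g : EVec n → Fin N → Fin n → ℝ, Integrable g μ →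
        Filter.Tendsto
          (fun k => ∫ x in Ω, mdot (DFmat F (Du k x) - T₀ x) (g x))
          Filter.atTop (nhds (∫ x in Ω, mdot (χ x) (g x))) := by
    intro χ hχ hχS g hg
    obtain ⟨Cχ, hCχ⟩ := hχ.2.1
    exact dual_conv (μ := μ) hL.le hFC1 hlip hDF hTmeas hχ.1 hTM
      ((ae_restrict_iff' hΩm).2 (ae_of_all _ hCχ)) hm0 hχS (fun k => hDi _ _ (hu k))
      (fun k => hχ.2.2 _ _ (hu k)) hminseq hB hg
  -- weak duality
  have hweak : ∀ χ : EVec n → Fin N → Fin n → ℝ, MemLinfPerp Ω χ →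
      ENNReal.ofReal (F 0 * μ.real univ - m) ≤ ∫⁻ x, FstarShift F (T₀ x + χ x) ∂μ := by
    intro χ hχ
    obtain ⟨Cχ, hCχ⟩ := hχ.2.1
    have hχb : ∀ᵐ x ∂μ, mnorm (χ x) ≤ Cχ := (ae_restrict_iff' hΩm).2 (ae_of_all _ hCχ)
    have hk : ∀ k, ENNReal.ofReal (F 0 * μ.real univ - FFgen Ω F T₀ (Du k)) ≤
        ∫⁻ x, FstarShift F (T₀ x + χ x) ∂μ := by
      intro k
      have hv := hDi _ _ (hu k)
      have i1 := hFFi _ hv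
      have i2 := integrable_mdot hχ.1 hχb hv
      have h0 : ∫ x, mdot (χ x) (Du k x) ∂μ = 0 := hχ.2.2 _ _ (hu k)
      have i3 : Integrable (fun x => F 0 - (F (Du k x) - mdot (T₀ x) (Du k x))) μ :=
        (integrable_const _).sub i1
      have h1 : F 0 * μ.real univ - FFgen Ω F T₀ (Du k) =
          ∫ x, ((F 0 - (F (Du k x) - mdot (T₀ x) (Du k x))) + mdot (χ x) (Du k x)) ∂μ := by
        rw [integral_add i3 i2, h0, integral_sub (integrable_const _) i1, integral_const,
          smul_eq_mul, add_zero, mul_comm]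
        rfl
      rw [h1]
      refine (ofReal_integral_le_aux (i3.add i2)).trans (lintegral_mono fun x => ?_)
      refine le_trans (ENNReal.ofReal_le_ofReal (le_of_eq ?_))
        (le_iSup (fun w => ENNReal.ofReal (mdot (T₀ x + χ x) w - F w + F 0)) (Du k x))
      rw [mdot_add_left, Pi.add_apply]; ring
    refine le_of_tendsto' (ENNReal.tendsto_ofReal (hminseq.const_sub _)) hk
  -- strong duality
  obtain ⟨σ, hσm, ⟨Cσ, hCσ⟩, hσ0, hσF⟩ := strong_dual (μ := μ) hL.le hcF hlip hFconv hTmeas hM hTM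
    (gradSub N Ω) m (by
      rintro v ⟨w, Dw, h, e⟩
      refine (hmle w Dw h).trans (le_of_eq (integral_congr_ae ?_))
      filter_upwards [e] with x hx
      rw [hx])
  have hσmem : MemLinfPerp Ω σ := by
    refine ⟨hσm.aestronglyMeasurable, ⟨Cσ, fun x _ => hCσ x⟩, fun w Dw h => ?_⟩
    exact hσ0 Dw (hDi w Dw h) ⟨w, Dw, h, (hDi w Dw h).coeFn_toL1⟩
  have hσS : ∫⁻ x, FstarShift F (T₀ x + σ x) ∂μ ≤ ENNReal.ofReal (F 0 * μ.real univ - m) := by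
    let T' := hTmeas.mk T₀
    have hTe : T₀ =ᵐ[μ] T' := hTmeas.ae_eq_mk
    have h1 : ∫⁻ x, FstarShift F (T₀ x + σ x) ∂μ = ∫⁻ x, FstarShift F ((T' + σ) x) ∂μ := by
      refine lintegral_congr_ae ?_
      filter_upwards [hTe] with x hx
      rw [hx]; rfl
    rw [h1]
    refine interchange hL.le hcF hlip (hTmeas.stronglyMeasurable_mk.add hσm) (M := M + Cσ) ?_ m ?_
    · filter_upwards [hTM, hTe] with x h1 h2
      change mnorm (T' x + σ x) ≤ _
      rw [← h2]
      exact (mnorm_add_le _ _).trans (add_le_add h1 (hCσ x))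
    · intro v hv
      refine (hσF v hv).trans (le_of_eq (integral_congr_ae ?_))
      filter_upwards [hTe] with x hx
      rw [hx]; rfl
  refine ⟨σ, hσmem, ?_, ?_, fun g hg => hconv σ hσmem hσS g hg⟩
  · intro χ hχ
    unfold Rdual
    exact EReal.sub_le_sub le_rfl (EReal.coe_ennreal_le_coe_ennreal_iff.2 (hσS.trans (hweak χ hχ)))
  · intro χ hχ heq
    have hI : ∫⁻ x, FstarShift F (T₀ x + χ x) ∂μ = ∫⁻ x, FstarShift F (T₀ x + σ x) ∂μ := by
      unfold Rdual at heq
      have h2 : ((∫⁻ x, FstarShift F (T₀ x + χ x) ∂μ : ℝ≥0∞) : EReal) =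
          ((∫⁻ x, FstarShift F (T₀ x + σ x) ∂μ : ℝ≥0∞) : EReal) := by
        exact ereal_cancel _ _ _ heq
      exact EReal.coe_ennreal_injective h2
    have hχS : ∫⁻ x, FstarShift F (T₀ x + χ x) ∂μ ≤ ENNReal.ofReal (F 0 * μ.real univ - m) :=
      hI.le.trans hσS
    obtain ⟨Cχ, hCχ⟩ := hχ.2.1
    refine ae_eq_of_forall_mdot (μ := μ) hσmem.1 hχ.1 (ae_of_all _ hCσ)
      ((ae_restrict_iff' hΩm).2 (ae_of_all _ hCχ)) fun g hg => ?_
    exact tendsto_nhds_unique (hconv χ hχ hχS g hg) (hconv σ hσmem hσS g hg)
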